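/- arXiv:2106.05333 — 6 statements merged into one kernel-verified Lean document; each statement's English description precedes it below -/
import Mathlib

section
/- Let α, β, γ be nonnegative integers with α ≥ 1 and β + γ ≤ 1, and let G be a complete (α+β+γ)-partite graph having exactly α parts of size 1, exactly β parts of size 2, and exactly γ parts of size greater than or equal to 3. Then dim(G) = α + β + 2γ − 1. -/
/-- `G` has a unit-distance representation in `ℝ^n`: an injective map of the vertices to
points of Euclidean `n`-space with adjacent vertices at Euclidean distance exactly `1`. -/
def SimpleGraph.HasUnitDistRep {V : Type*} (G : SimpleGraph V) (n : ℕ) : Prop :=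
  ∃ f : V → EuclideanSpace ℝ (Fin n),
    Function.Injective f ∧ ∀ ⦃u v⦄, G.Adj u v → Dist.dist (f u) (f v) = 1

/-- The dimension of `G`: the least `n` such that `G` has a unit-distance representation
in `ℝ^n`. -/
noncomputable def SimpleGraph.udim {V : Type*} (G : SimpleGraph V) : ℕ :=
  sInf {n | G.HasUnitDistRep n}

/-- `G` is dimension-critical: deleting any edge strictly lowers the dimension. -/
def SimpleGraph.IsDimCritical {V : Type*} (G : SimpleGraph V) : Prop :=
  ∀ e ∈ G.edgeSet, (G.deleteEdges {e}).udim < G.udim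

/-!
The parts of size one span a clique `K`, and since at most one other part exists, `G` is the join of
`K` with an independent set `B`. A unit-distance representation maps `K` to a regular simplex of
dimension `k = α - 1` and edge length one. The points of `ℝ^(k + m)` at distance one from all its
vertices form a sphere in the `m`-dimensional orthogonal complement through the centroid, so `G` is
representable in `ℝ^(k + m)` exactly when `B` embeds in the unit sphere of `ℝ^m`. These spheres have
`0`, `2` and continuum many points for `m = 0, 1, 2`.
-/

open Module Metric Set
open scoped Cardinal

section RegularSimplex

variable {E P ι : Type*} [NormedAddCommGroup E] [InnerProductSpace ℝ E] [MetricSpace P]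
  [NormedAddTorsor E P] {p : ι → P} {r : ℝ}

theorem norm_sq_weightedVSub_of_pairwise_dist_eq (hp : Pairwise fun i j ↦ dist (p i) (p j) = r)
    (s : Finset ι) {w : ι → ℝ} (hw : ∑ i ∈ s, w i = 0) :
    ‖s.weightedVSub p w‖ ^ 2 = r ^ 2 / 2 * ∑ i ∈ s, w i ^ 2 := by
  classical
  have hdist (i j : ι) :
      dist (p i) (p j) * dist (p i) (p j) = r ^ 2 - if i = j then r ^ 2 else 0 := by
    obtain rfl | hij := eq_or_ne i j
    · simp
    · simp [hp hij, hij, sq]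
  have hsum : ∑ i ∈ s, ∑ j ∈ s, w i * w j * (dist (p i) (p j) * dist (p i) (p j)) =
      -(r ^ 2 * ∑ i ∈ s, w i ^ 2) := by
    simp only [hdist, mul_sub, Finset.sum_sub_distrib, ← Finset.sum_mul, ← Finset.mul_sum, hw]
    simp [Finset.mul_sum, sq, mul_comm]
  rw [← real_inner_self_eq_norm_sq, EuclideanGeometry.inner_weightedVSub p hw p hw, hsum]
  ring

theorem affineIndependent_of_pairwise_dist_eq (hr : r ≠ 0)
    (hp : Pairwise fun i j ↦ dist (p i) (p j) = r) : AffineIndependent ℝ p := by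
  intro s w hw hsum i hi
  have hsq : ∑ i ∈ s, w i ^ 2 = 0 := by
    simpa [hsum, hr] using norm_sq_weightedVSub_of_pairwise_dist_eq hp s hw
  simpa using (Finset.sum_eq_zero_iff_of_nonneg fun i _ ↦ sq_nonneg (w i)).1 hsq i hi

theorem dist_centroid_sq_of_pairwise_dist_eq [Fintype ι]
    (hp : Pairwise fun i j ↦ dist (p i) (p j) = r) (i : ι) :
    dist (p i) (Finset.univ.centroid ℝ p) ^ 2 = r ^ 2 / 2 * (1 - 1 / Fintype.card ι) := by
  classical
  have : Nonempty ι := ⟨i⟩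
  set w : ι → ℝ := Pi.single i 1 - Finset.univ.centroidWeights ℝ with hw_def
  have hcard : (Fintype.card ι : ℝ) ≠ 0 := by positivity
  have hw : ∑ j, w j = 0 := by simp [hw_def, hcard]
  have hw_apply (j : ι) : w j = (if j = i then 1 else 0) - 1 / Fintype.card ι := by
    simp [hw_def, Pi.single_apply]
  have hw_sq : ∑ j, w j ^ 2 = 1 - 1 / Fintype.card ι := calc
    ∑ j, w j ^ 2 = ∑ j, ((if j = i then w j else 0) - 1 / Fintype.card ι * w j) :=
      Finset.sum_congr rfl fun j _ ↦ by rw [hw_apply]; split_ifs <;> ring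
    _ = w i - 1 / Fintype.card ι * ∑ j, w j := by
      simp [Finset.sum_sub_distrib, Finset.mul_sum]
    _ = 1 - 1 / Fintype.card ι := by rw [hw, hw_apply, if_pos rfl, mul_zero, sub_zero]
  have hvsub : p i -ᵥ Finset.univ.centroid ℝ p = Finset.univ.weightedVSub p w := by
    rw [← Finset.affineCombination_vsub, Finset.affineCombination_piSingle _ _ _
      (Finset.mem_univ i), Finset.centroid_def]
  rw [dist_eq_norm_vsub E, hvsub, norm_sq_weightedVSub_of_pairwise_dist_eq hp _ hw, hw_sq]

theorem dist_sq_eq_of_vsub_mem_orthogonal {c q : P} {s : Set P}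
    (hc : c ∈ affineSpan ℝ s) (hq : q -ᵥ c ∈ (vectorSpan ℝ s)ᗮ) {x : P} (hx : x ∈ s) :
    dist q x ^ 2 = ‖q -ᵥ c‖ ^ 2 + dist x c ^ 2 := by
  have hinner : inner ℝ (q -ᵥ c) (x -ᵥ c) = 0 :=
    Submodule.inner_left_of_mem_orthogonal
      (vsub_mem_vectorSpan_of_mem_affineSpan_of_mem_affineSpan (mem_affineSpan ℝ hx) hc) hq
  rw [dist_eq_norm_vsub E, ← vsub_sub_vsub_cancel_right q x c, norm_sub_sq_real, hinner,
    ← dist_eq_norm_vsub E x]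
  ring

theorem vsub_mem_orthogonal_vectorSpan_range {c q : P} {ρ : ℝ} (hc : ∀ i, dist (p i) c = ρ)
    (hq : ∀ i, dist (p i) q = r) : q -ᵥ c ∈ (vectorSpan ℝ (range p))ᗮ := by
  rw [← Submodule.span_singleton_le_iff_mem, ← Submodule.isOrtho_iff_le, vectorSpan_def,
    Submodule.isOrtho_span]
  rintro _ rfl _ ⟨_, ⟨i, rfl⟩, _, ⟨j, rfl⟩, rfl⟩
  exact
    (EuclideanGeometry.inner_vsub_vsub_of_dist_eq_of_dist_eq ((hc j).trans (hc i).symm)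
      ((hq j).trans (hq i).symm))

theorem forall_dist_eq_iff_of_mem_affineSpan [Nonempty ι] {c q : P} {ρ : ℝ}
    (hc : c ∈ affineSpan ℝ (range p)) (hρ : ∀ i, dist (p i) c = ρ) (hr : 0 ≤ r) :
    (∀ i, dist (p i) q = r) ↔
      q -ᵥ c ∈ (vectorSpan ℝ (range p))ᗮ ∧ ‖q -ᵥ c‖ ^ 2 = r ^ 2 - ρ ^ 2 := by
  have hpyth (hq : q -ᵥ c ∈ (vectorSpan ℝ (range p))ᗮ) (i : ι) :
      dist (p i) q ^ 2 = ‖q -ᵥ c‖ ^ 2 + ρ ^ 2 := by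
    rw [dist_comm, dist_sq_eq_of_vsub_mem_orthogonal hc hq (mem_range_self i), hρ]
  constructor
  · intro hq
    have hperp := vsub_mem_orthogonal_vectorSpan_range hρ hq
    obtain ⟨i⟩ := ‹Nonempty ι›
    exact ⟨hperp, by rw [← hq i, hpyth hperp, add_sub_cancel_right]⟩
  · rintro ⟨hperp, hnorm⟩ i
    rw [← sq_eq_sq₀ dist_nonneg hr, hpyth hperp, hnorm, sub_add_cancel]

theorem exists_forall_dist_eq_iff_of_pairwise_dist_eq [Finite ι] [Nonempty ι] (hr : 0 < r)
    (hp : Pairwise fun i j ↦ dist (p i) (p j) = r) :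
    ∃ c : P, ∃ h > 0, ∀ q, (∀ i, dist (p i) q = r) ↔
      q -ᵥ c ∈ (vectorSpan ℝ (range p))ᗮ ∧ ‖q -ᵥ c‖ = h := by
  have := Fintype.ofFinite ι
  set c := Finset.univ.centroid ℝ p
  have hc : c ∈ affineSpan ℝ (range p) :=
    centroid_mem_affineSpan_of_nonempty ℝ p Finset.univ_nonempty
  set ρ := √(r ^ 2 / 2 * (1 - 1 / Fintype.card ι))
  have hρ (i : ι) : dist (p i) c = ρ := by
    rw [← Real.sqrt_sq (dist_nonneg (x := p i)), dist_centroid_sq_of_pairwise_dist_eq hp i]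
  have hρr : 0 < r ^ 2 - ρ ^ 2 := by
    obtain ⟨i⟩ := ‹Nonempty ι›
    have hcard : (0 : ℝ) < 1 / Fintype.card ι := by positivity
    rw [← hρ i, dist_centroid_sq_of_pairwise_dist_eq hp i]
    nlinarith [pow_pos hr 2]
  refine ⟨c, √(r ^ 2 - ρ ^ 2), Real.sqrt_pos.2 hρr, fun q ↦ ?_⟩
  rw [forall_dist_eq_iff_of_mem_affineSpan hc hρ hr.le, eq_comm (a := ‖q -ᵥ c‖),
    Real.sqrt_eq_iff_eq_sq hρr.le (norm_nonneg _), eq_comm (a := r ^ 2 - ρ ^ 2)]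

theorem nonempty_sphere_equiv_unit_sphere [FiniteDimensional ℝ E] {m : ℕ} (hE : finrank ℝ E = m)
    (hr : 0 < r) : Nonempty (sphere (0 : E) r ≃ sphere (0 : EuclideanSpace ℝ (Fin m)) 1) := by
  let φ : E ≃ₗᵢ[ℝ] EuclideanSpace ℝ (Fin m) :=
    ((stdOrthonormalBasis ℝ E).reindex (finCongr hE)).repr
  exact ⟨{
    toFun x := ⟨r⁻¹ • φ x, by simp [norm_smul, abs_of_pos hr, hr.ne']⟩
    invFun y := ⟨r • φ.symm y, by simp [norm_smul, hr.le]⟩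
    left_inv x := by simp [hr.ne']
    right_inv y := by simp [hr.ne'] }⟩

theorem finrank_vectorSpan_of_pairwise_dist_eq [Fintype ι] {k : ℕ} (hr : r ≠ 0)
    (hp : Pairwise fun i j ↦ dist (p i) (p j) = r) (hι : Fintype.card ι = k + 1) :
    finrank ℝ (vectorSpan ℝ (range p)) = k :=
  (affineIndependent_of_pairwise_dist_eq hr hp).finrank_vectorSpan hι

theorem nonempty_equidistant_equiv_sphere [Fintype ι] [FiniteDimensional ℝ E] {k m : ℕ}
    (hr : 0 < r) (hp : Pairwise fun i j ↦ dist (p i) (p j) = r)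
    (hι : Fintype.card ι = k + 1) (hE : finrank ℝ E = k + m) :
    Nonempty ({q // ∀ i, dist (p i) q = r} ≃ sphere (0 : EuclideanSpace ℝ (Fin m)) 1) := by
  have : Nonempty ι := Fintype.card_pos_iff.1 (by lia)
  obtain ⟨c, h, hh, hq⟩ := exists_forall_dist_eq_iff_of_pairwise_dist_eq hr hp
  set W := vectorSpan ℝ (range p)
  have hW : finrank ℝ Wᗮ = m := Submodule.finrank_add_finrank_orthogonal' <| by
    rw [finrank_vectorSpan_of_pairwise_dist_eq hr.ne' hp hι, hE]
  obtain ⟨φ⟩ := nonempty_sphere_equiv_unit_sphere hW hh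
  let ψ : {q // ∀ i, dist (p i) q = r} ≃ sphere (0 : Wᗮ) h :=
    { toFun q := ⟨⟨q.1 -ᵥ c, ((hq q).1 q.2).1⟩, mem_sphere_zero_iff_norm.2 ((hq q).1 q.2).2⟩
      invFun x := ⟨(x : E) +ᵥ c, (hq _).2 <| by
        simpa only [vadd_vsub] using ⟨x.1.2, mem_sphere_zero_iff_norm.1 x.2⟩⟩
      left_inv q := by simp
      right_inv x := by simp }
  exact ⟨ψ.trans φ⟩

variable (P) in
-- A new vertex is any point equidistant from the previous ones.
theorem exists_fin_pairwise_dist_eq [FiniteDimensional ℝ E] (hr : 0 < r) {k : ℕ}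
    (hk : k ≤ finrank ℝ E) : ∃ p : Fin (k + 1) → P, Pairwise fun i j ↦ dist (p i) (p j) = r := by
  induction k with
  | zero =>
    exact ⟨fun _ ↦ Classical.arbitrary P, fun i j hij ↦
      absurd (Subsingleton.elim (α := Fin 1) i j) hij⟩
  | succ k ih =>
    obtain ⟨p, hp⟩ := ih (by lia)
    obtain ⟨m, hm⟩ := Nat.exists_eq_add_of_le hk
    obtain ⟨φ⟩ := nonempty_equidistant_equiv_sphere hr hp (Fintype.card_fin _)
      (hm.trans (add_assoc k 1 m))
    have : Nonempty (Fin (1 + m)) := ⟨0, by lia⟩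
    obtain ⟨y⟩ := (NormedSpace.sphere_nonempty
      (x := (0 : EuclideanSpace ℝ (Fin (1 + m)))) (r := 1)).2 zero_le_one |>.to_subtype
    obtain ⟨q, hq⟩ := φ.symm y
    refine ⟨Fin.cons q p, pairwise_fin_succ_iff.2 ⟨fun i ↦ ?_, fun i ↦ ?_, hp⟩⟩
    · exact hq i
    · exact (dist_comm q (p i)).trans (hq i)

end RegularSimplex

theorem mk_sphere_euclideanSpace_fin_one : #(sphere (0 : EuclideanSpace ℝ (Fin 1)) 1) = 2 := by
  let φ : ℝ ≃ₗᵢ[ℝ] EuclideanSpace ℝ (Fin 1) := (OrthonormalBasis.singleton (Fin 1) ℝ).repr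
  rw [← map_zero φ, ← φ.image_sphere, Cardinal.mk_image_eq φ.injective,
    Real.sphere_eq_pair 0 zero_le_one, Cardinal.mk_insert (by norm_num), Cardinal.mk_singleton,
    one_add_one_eq_two]

theorem mk_sphere_euclideanSpace_fin_two : #(sphere (0 : EuclideanSpace ℝ (Fin 2)) 1) = 𝔠 := by
  let φ : ℂ ≃ₗᵢ[ℝ] EuclideanSpace ℝ (Fin 2) := Complex.orthonormalBasisOneI.repr
  rw [← map_zero φ, ← φ.image_sphere, Cardinal.mk_image_eq φ.injective]
  exact (Cardinal.mk_congr Circle.argEquiv).trans (Cardinal.mk_Ioc_real (by linarith [Real.pi_pos]))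

/-- `B` has at most as many elements as the unit sphere of `ℝ^m`, which for `m = 0` is empty. This
is the condition for placing the independent vertices `B` of a complete split graph `m` dimensions
above its clique. -/
def EmbedsInUnitSphere (B : Type*) (m : ℕ) : Prop :=
  Nonempty (B ↪ sphere (0 : EuclideanSpace ℝ (Fin m)) 1)

section EmbedsInUnitSphere

variable {B : Type*}

theorem embedsInUnitSphere_zero_iff : EmbedsInUnitSphere B 0 ↔ #B = 0 := by
  rw [EmbedsInUnitSphere, ← Cardinal.lift_mk_le']
  simp

theorem embedsInUnitSphere_one_iff : EmbedsInUnitSphere B 1 ↔ #B ≤ 2 := by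
  rw [EmbedsInUnitSphere, ← Cardinal.lift_mk_le', mk_sphere_euclideanSpace_fin_one]
  simp

theorem embedsInUnitSphere_two_iff : EmbedsInUnitSphere B 2 ↔ #B ≤ 𝔠 := by
  rw [EmbedsInUnitSphere, ← Cardinal.lift_mk_le', mk_sphere_euclideanSpace_fin_two]
  simp

theorem isLeast_embedsInUnitSphere_zero (hB : #B = 0) : IsLeast {m | EmbedsInUnitSphere B m} 0 :=
  ⟨embedsInUnitSphere_zero_iff.2 hB, fun _ _ ↦ Nat.zero_le _⟩

theorem isLeast_embedsInUnitSphere_one (hB₀ : #B ≠ 0) (hB : #B ≤ 2) :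
    IsLeast {m | EmbedsInUnitSphere B m} 1 := by
  refine ⟨embedsInUnitSphere_one_iff.2 hB, fun m hm ↦ Nat.one_le_iff_ne_zero.2 ?_⟩
  rintro rfl
  exact hB₀ (embedsInUnitSphere_zero_iff.1 hm)

theorem isLeast_embedsInUnitSphere_two (hB₂ : 2 < #B) (hB : #B ≤ 𝔠) :
    IsLeast {m | EmbedsInUnitSphere B m} 2 := by
  refine ⟨embedsInUnitSphere_two_iff.2 hB, fun m hm ↦ ?_⟩
  by_contra! hlt
  interval_cases m
  · exact hB₂.not_ge <| by simp [embedsInUnitSphere_zero_iff.1 hm]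
  · exact hB₂.not_ge (embedsInUnitSphere_one_iff.1 hm)

end EmbedsInUnitSphere

/-- `G` is the join of a clique on `A` and an independent set on `Aᶜ` (a complete split graph). Its
unit-distance representations consist of a regular simplex on `A` and points equidistant from the
vertices of that simplex. -/
def IsCompleteSplit {V : Type*} (G : SimpleGraph V) (A : Set V) : Prop :=
  ∀ u v, G.Adj u v ↔ u ≠ v ∧ (u ∈ A ∨ v ∈ A)

namespace IsCompleteSplit

variable {V : Type*} {G : SimpleGraph V} {A : Set V} {k m n : ℕ}

theorem hasUnitDistRep_iff (hG : IsCompleteSplit G A) :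
    G.HasUnitDistRep n ↔ ∃ p : A → EuclideanSpace ℝ (Fin n),
      (Pairwise fun a b ↦ dist (p a) (p b) = 1) ∧
        Nonempty ((Aᶜ : Set V) ↪ {q // ∀ a, dist (p a) q = 1}) := by
  constructor
  · rintro ⟨f, hf, hdist⟩
    refine ⟨fun a ↦ f a, fun a b hab ↦ hdist ((hG a b).2 ⟨Subtype.coe_ne_coe.2 hab, .inl a.2⟩),
      ⟨fun b ↦ ⟨f b, fun a ↦ hdist ((hG a b).2 ⟨?_, .inl a.2⟩)⟩, fun b b' h ↦ ?_⟩⟩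
    · exact ne_of_mem_of_not_mem a.2 b.2
    · exact Subtype.ext (hf (congrArg Subtype.val h))
  · rintro ⟨p, hp, ⟨g⟩⟩
    have hp_inj : Function.Injective p := by
      intro a b hab
      by_contra hne
      simpa [hab] using hp hne
    have hpg (a : A) (b : (Aᶜ : Set V)) : p a ≠ g b := fun h ↦ by simpa [h] using (g b).2 a
    classical
    let e := Equiv.Set.sumCompl A
    let f : A ⊕ (Aᶜ : Set V) → EuclideanSpace ℝ (Fin n) := Sum.elim p fun b ↦ g b
    have hf : Function.Injective f := hp_inj.sumElim (Subtype.val_injective.comp g.injective) hpg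
    have hdist : ∀ x y, G.Adj (e x) (e y) → dist (f x) (f y) = 1 := by
      rintro (a | b) (a' | b') h
      · exact hp (fun h' ↦ h.ne (by rw [h']))
      · exact (g b').2 a
      · exact (dist_comm _ _).trans ((g b).2 a')
      · exact absurd ((hG _ _).1 h).2 (not_or.2 ⟨b.2, b'.2⟩)
    exact ⟨f ∘ e.symm, hf.comp e.symm.injective, fun u v huv ↦ hdist _ _ (by simpa using huv)⟩

theorem le_of_hasUnitDistRep (hG : IsCompleteSplit G A) (hA : A.ncard = k + 1)
    (h : G.HasUnitDistRep n) : k ≤ n := by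
  have : Fintype A := (finite_of_ncard_ne_zero (by lia)).fintype
  obtain ⟨p, hp, -⟩ := hG.hasUnitDistRep_iff.1 h
  have hcard : Fintype.card A = k + 1 := by rwa [← Nat.card_eq_fintype_card]
  calc
    k = finrank ℝ (vectorSpan ℝ (range p)) :=
      (finrank_vectorSpan_of_pairwise_dist_eq one_ne_zero hp hcard).symm
    _ ≤ finrank ℝ (EuclideanSpace ℝ (Fin n)) := Submodule.finrank_le _
    _ = n := finrank_euclideanSpace_fin

theorem hasUnitDistRep_add_iff (hG : IsCompleteSplit G A) (hA : A.ncard = k + 1) :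
    G.HasUnitDistRep (k + m) ↔ EmbedsInUnitSphere (Aᶜ : Set V) m := by
  have : Fintype A := (finite_of_ncard_ne_zero (by lia)).fintype
  have hcard : Fintype.card A = k + 1 := by rwa [← Nat.card_eq_fintype_card]
  have hdim : finrank ℝ (EuclideanSpace ℝ (Fin (k + m))) = k + m := finrank_euclideanSpace_fin
  rw [hG.hasUnitDistRep_iff]
  constructor
  · rintro ⟨p, hp, ⟨g⟩⟩
    obtain ⟨φ⟩ := nonempty_equidistant_equiv_sphere one_pos hp hcard hdim
    exact ⟨g.trans φ.toEmbedding⟩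
  · rintro ⟨g⟩
    obtain ⟨p, hp⟩ := exists_fin_pairwise_dist_eq (EuclideanSpace ℝ (Fin (k + m))) one_pos
      (hdim.symm ▸ Nat.le_add_right k m)
    let e := Fintype.equivFinOfCardEq hcard
    have hpe : Pairwise fun a b ↦ dist (p (e a)) (p (e b)) = 1 := hp.comp_of_injective e.injective
    obtain ⟨φ⟩ := nonempty_equidistant_equiv_sphere one_pos hpe hcard hdim
    exact ⟨_, hpe, ⟨g.trans φ.symm.toEmbedding⟩⟩

theorem udim_eq (hG : IsCompleteSplit G A) (hA : A.ncard = k + 1)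
    (hm : IsLeast {m | EmbedsInUnitSphere (Aᶜ : Set V) m} m) : G.udim = k + m := by
  refine IsLeast.csInf_eq ⟨(hG.hasUnitDistRep_add_iff hA).2 hm.1, fun n hn ↦ ?_⟩
  obtain ⟨l, rfl⟩ := Nat.exists_eq_add_of_le (hG.le_of_hasUnitDistRep hA hn)
  exact Nat.add_le_add_left (hm.2 ((hG.hasUnitDistRep_add_iff hA).1 hn)) k

end IsCompleteSplit

section MultipartiteParts

variable {V ι : Type*} {P : V → ι}

/-- The parts of size one of a multipartite graph, encoded by the map `P` sending a vertex to its
part. Their vertices are joined to every other vertex, so they span the clique of the split used to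
compute the dimension. -/
def singletonParts (P : V → ι) : Set ι := {i | #(P ⁻¹' {i}) = 1}

theorem injOn_preimage_singletonParts : InjOn P (P ⁻¹' singletonParts P) := by
  intro u hu v _ huv
  have : Subsingleton (P ⁻¹' {P u}) := (Cardinal.eq_one_iff_unique.1 hu).1
  exact congrArg Subtype.val (Subsingleton.elim (⟨u, rfl⟩ : P ⁻¹' {P u}) ⟨v, huv.symm⟩)

theorem isCompleteSplit_preimage_singletonParts {G : SimpleGraph V}
    (hG : ∀ u v, G.Adj u v ↔ P u ≠ P v) (hP : (singletonParts P)ᶜ.Subsingleton) :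
    IsCompleteSplit G (P ⁻¹' singletonParts P) := by
  intro u v
  rw [hG]
  constructor
  · refine fun h ↦ ⟨fun huv ↦ h (congrArg P huv), ?_⟩
    by_contra! hne
    exact h (hP hne.1 hne.2)
  · rintro ⟨hne, hsingle⟩ h
    have huv : P u ∈ singletonParts P ∧ P v ∈ singletonParts P := by
      simpa [h] using hsingle
    exact hne (injOn_preimage_singletonParts huv.1 huv.2 h)

theorem ncard_preimage_singletonParts (P : V → ι) :
    (P ⁻¹' singletonParts P).ncard = (singletonParts P).ncard := by
  have hrange : singletonParts P ⊆ range P := by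
    intro i hi
    obtain ⟨⟨v, hv⟩⟩ := (Cardinal.eq_one_iff_unique.1 hi).2
    exact ⟨v, hv⟩
  rw [← injOn_preimage_singletonParts.ncard_image, image_preimage_eq_of_subset hrange]

theorem isLeast_embedsInUnitSphere_compl_preimage_singletonParts [Finite ι] {β γ : ℕ}
    (hβγ : β + γ ≤ 1) (hV : #V ≤ 𝔠) (hcompl : (singletonParts P)ᶜ.ncard = β + γ)
    (h2 : {i | #(P ⁻¹' {i}) = 2}.ncard = β) (h3 : {i | 3 ≤ #(P ⁻¹' {i})}.ncard = γ) :
    IsLeast {m | EmbedsInUnitSphere ((P ⁻¹' singletonParts P)ᶜ : Set V) m} (β + 2 * γ) := by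
  have hsub : (singletonParts P)ᶜ.Subsingleton :=
    ncard_le_one_iff_subsingleton.1 (hcompl.trans_le hβγ)
  have hfiber {j : ι} (hj : #(P ⁻¹' {j}) ≠ 1) : (P ⁻¹' singletonParts P)ᶜ = P ⁻¹' {j} :=
    congrArg (P ⁻¹' ·) (hsub.eq_singleton_of_mem hj)
  obtain ⟨rfl, rfl⟩ | ⟨rfl, rfl⟩ | ⟨rfl, rfl⟩ :
      (β = 0 ∧ γ = 0) ∨ (β = 1 ∧ γ = 0) ∨ (β = 0 ∧ γ = 1) := by lia
  · refine isLeast_embedsInUnitSphere_zero ?_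
    rw [← preimage_compl, (ncard_eq_zero).1 hcompl, preimage_empty, Cardinal.mk_eq_zero]
  · obtain ⟨j, hj⟩ : {i | #(P ⁻¹' {i}) = 2}.Nonempty := nonempty_of_ncard_ne_zero (by lia)
    have hj : #(P ⁻¹' {j}) = 2 := hj
    rw [hfiber (hj ▸ Cardinal.one_lt_two.ne')]
    exact isLeast_embedsInUnitSphere_one (by norm_num [hj]) hj.le
  · obtain ⟨j, hj⟩ : {i | 3 ≤ #(P ⁻¹' {i})}.Nonempty := nonempty_of_ncard_ne_zero (by lia)
    have hj : 3 ≤ #(P ⁻¹' {j}) := hj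
    have h2j : 2 < #(P ⁻¹' {j}) := lt_of_lt_of_le (by norm_num) hj
    rw [hfiber (Cardinal.one_lt_two.trans h2j).ne']
    exact isLeast_embedsInUnitSphere_two h2j ((Cardinal.mk_set_le _).trans hV)

theorem dim_complete_multipartite_low_general {α β γ : ℕ} (hα : 1 ≤ α) (hβγ : β + γ ≤ 1)
    (hV : #V ≤ 𝔠) {G : SimpleGraph V} (hadj : ∀ u v, G.Adj u v ↔ P u ≠ P v)
    (hι : Nat.card ι = α + β + γ) (h1 : {i | #(P ⁻¹' {i}) = 1}.ncard = α)
    (h2 : {i | #(P ⁻¹' {i}) = 2}.ncard = β) (h3 : {i | 3 ≤ #(P ⁻¹' {i})}.ncard = γ) :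
    G.udim = α + β + 2 * γ - 1 := by
  have : Finite ι := Nat.finite_of_card_ne_zero (by lia)
  obtain ⟨k, rfl⟩ := Nat.exists_eq_add_of_le' hα
  have hsingle : (singletonParts P).ncard = k + 1 := h1
  have hcompl : (singletonParts P)ᶜ.ncard = β + γ := by
    have := ncard_add_ncard_compl (singletonParts P)
    lia
  have hG : IsCompleteSplit G (P ⁻¹' singletonParts P) :=
    isCompleteSplit_preimage_singletonParts hadj
      (ncard_le_one_iff_subsingleton.1 (hcompl.trans_le hβγ))
  rw [hG.udim_eq ((ncard_preimage_singletonParts P).trans hsingle)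
    (isLeast_embedsInUnitSphere_compl_preimage_singletonParts hβγ hV hcompl h2 h3)]
  lia

end MultipartiteParts

theorem dim_complete_multipartite_low (α β γ : ℕ) (hα : 1 ≤ α) (hβγ : β + γ ≤ 1)
    (V : Type) [Fintype V] (ι : Type) [Fintype ι] [DecidableEq ι]
    (P : V → ι) (G : SimpleGraph V)
    (hadj : ∀ u v, G.Adj u v ↔ P u ≠ P v)
    (hι : Fintype.card ι = α + β + γ)
    (h1 : (Finset.univ.filter fun i : ι => Fintype.card {v // P v = i} = 1).card = α)
    (h2 : (Finset.univ.filter fun i : ι => Fintype.card {v // P v = i} = 2).card = β)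
    (h3 : (Finset.univ.filter fun i : ι => 3 ≤ Fintype.card {v // P v = i}).card = γ) :
    G.udim = α + β + 2 * γ - 1 := by
  have hpart (i : ι) : #(P ⁻¹' {i}) = Fintype.card {v // P v = i} :=
    Cardinal.mk_fintype {v // P v = i}
  refine dim_complete_multipartite_low_general (P := P) hα hβγ
    (Cardinal.mk_le_aleph0.trans Cardinal.aleph0_le_continuum) hadj
    (Nat.card_eq_fintype_card.trans hι) ?_ ?_ ?_
  all_goals
    simp only [hpart, ncard_eq_toFinset_card', toFinset_ofPred]
    assumption_mod_cast
end

section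
/- Let α, β, γ be nonnegative integers with β + γ ≥ 2, and let G be a complete (α+β+γ)-partite graph having exactly α parts of size 1, exactly β parts of size 2, and exactly γ parts of size greater than or equal to 3. Then dim(G) = α + β + 2γ. -/
/-!
Put a part with at most two vertices on a sphere of radius `√(1/2)` in a line, and a larger part on
such a circle in a plane. If these lines and planes are mutually orthogonal, points of different
parts are at distance `1`.

Conversely, in any unit-distance representation the direction spaces of the affine spans of the
parts are mutually orthogonal. Every part lies on a sphere, so a part with at least three vertices
spans at least two dimensions, while a singleton part spans none. To recover the missing dimension
of each singleton, consider two parts with at least two vertices. Orthogonality forces their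
circumradii to satisfy `r ^ 2 + r' ^ 2 ≤ 1`, so one of them has `r ^ 2 ≤ 1 / 2`. From its
circumcentre the singletons are seen along vectors of squared norm `1 - r ^ 2 ≥ 1 / 2` at mutual
distance `1`. Their Gram matrix is positive definite, and they are orthogonal to all the direction
spaces.
-/

open Function Module
open scoped Cardinal InnerProductSpace

section LinearAlgebra

theorem finrank_iSup_of_iSupIndep {K M ι : Type*} [DivisionRing K] [AddCommGroup M] [Module K M]
    [Fintype ι] {U : ι → Submodule K M} [∀ i, FiniteDimensional K (U i)] (hU : iSupIndep U) :
    finrank K ↥(⨆ i, U i) = ∑ i, finrank K (U i) := by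
  classical
  rw [Submodule.iSup_eq_range_dfinsupp_lsum,
    LinearMap.finrank_range_of_inj hU.dfinsupp_lsum_injective]
  exact finrank_directSum K fun i => U i

variable {E : Type*} [NormedAddCommGroup E] [InnerProductSpace ℝ E]

theorem linearIndependent_of_inner_eq {κ : Type*} [Finite κ] {v : κ → E} {c : ℝ} (hc : 0 ≤ c)
    (hdiag : ∀ k, c < ⟪v k, v k⟫_ℝ) (hoff : Pairwise fun k l => ⟪v k, v l⟫_ℝ = c) :
    LinearIndependent ℝ v := by
  classical
  have hgram : Matrix.gram ℝ v =
      Matrix.diagonal (fun k => ⟪v k, v k⟫_ℝ - c) + c • Matrix.vecMulVec 1 (star 1) := by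
    ext k l
    obtain rfl | hkl := eq_or_ne k l
    · simp
    · simp [hoff hkl, hkl]
  have := Fintype.ofFinite κ
  apply Matrix.linearIndependent_of_posDef_gram
  rw [hgram]
  exact (Matrix.PosDef.diagonal fun k => sub_pos.2 (hdiag k)).add_posSemidef
    ((Matrix.posSemidef_vecMulVec_self_star 1).smul hc)

theorem linearIndependent_sub_of_dist_eq {κ : Type*} [Finite κ] {p : κ → E} {o : E} {d R : ℝ}
    (hd : 0 < d) (hR : ∀ k, dist (p k) o ^ 2 = R) (hp : Pairwise fun k l => dist (p k) (p l) = d)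
    (hdR : d ^ 2 ≤ 2 * R) : LinearIndependent ℝ fun k => p k - o := by
  have hself (k) : ⟪p k - o, p k - o⟫_ℝ = R := by
    rw [real_inner_self_eq_norm_sq, ← dist_eq_norm, hR]
  refine linearIndependent_of_inner_eq (c := R - d ^ 2 / 2) (by linarith)
    (fun k => by rw [hself]; nlinarith) fun k l hkl => ?_
  have hnorm := norm_sub_sq_real (p k - o) (p l - o)
  rw [sub_sub_sub_cancel_right, ← dist_eq_norm, hp hkl, ← dist_eq_norm, hR, ← dist_eq_norm, hR]
    at hnorm
  linarith

theorem sub_mem_orthogonal_vectorSpan_of_dist_eq {C : Set E} {x y : E} {r r' : ℝ}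
    (hx : ∀ z ∈ C, dist z x = r) (hy : ∀ z ∈ C, dist z y = r') :
    x - y ∈ (vectorSpan ℝ C)ᗮ := by
  have hC : vectorSpan ℝ C ≤ (ℝ ∙ (x - y))ᗮ := by
    rw [vectorSpan, Submodule.span_le]
    rintro _ ⟨z, hz, w, hw, rfl⟩
    rw [SetLike.mem_coe, Submodule.mem_orthogonal_singleton_iff_inner_right]
    exact EuclideanGeometry.inner_vsub_vsub_of_dist_eq_of_dist_eq
      ((hy w hw).trans (hy z hz).symm) ((hx w hw).trans (hx z hz).symm)
  exact fun u hu => Submodule.mem_orthogonal_singleton_iff_inner_left.1 (hC hu)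

theorem dist_sq_eq_of_sub_mem_orthogonal {A : Set E} {a o x : E} (ha : a ∈ affineSpan ℝ A)
    (ho : o ∈ affineSpan ℝ A) (hx : x - o ∈ (vectorSpan ℝ A)ᗮ) :
    dist a x ^ 2 = dist a o ^ 2 + dist o x ^ 2 := by
  have hao : a - o ∈ vectorSpan ℝ A := by
    rw [← direction_affineSpan]
    exact AffineSubspace.vsub_mem_direction ha ho
  have := norm_sub_sq_eq_norm_sq_add_norm_sq_real (Submodule.inner_right_of_mem_orthogonal hao hx)
  rw [sub_sub_sub_cancel_right] at this
  simpa only [dist_eq_norm, sq, norm_sub_rev o x] using this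

theorem exists_mem_affineSpan_dist_eq_of_cospherical [FiniteDimensional ℝ E]
    {A : Set E} (hA : EuclideanGeometry.Cospherical A) (hne : A.Nonempty) :
    ∃ o ∈ affineSpan ℝ A, ∃ r, ∀ a ∈ A, dist a o = r := by
  have := (hne.affineSpan ℝ).to_subtype
  obtain ⟨x, hx⟩ := hA
  exact ⟨EuclideanGeometry.orthogonalProjection (affineSpan ℝ A) x,
    EuclideanGeometry.orthogonalProjection_mem x,
    (EuclideanGeometry.exists_dist_eq_iff_exists_dist_orthogonalProjection_eq
      (subset_affineSpan ℝ A) x).1 hx⟩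

theorem two_le_finrank_vectorSpan [FiniteDimensional ℝ E] {A : Set E}
    (hA : EuclideanGeometry.Cospherical A) (hcard : 3 ≤ A.encard) :
    2 ≤ finrank ℝ (vectorSpan ℝ A) := by
  have : Nontrivial A := by
    rw [← ENat.one_lt_card_iff_nontrivial]
    exact lt_of_lt_of_le (by norm_num) hcard
  obtain ⟨a, b, hab⟩ := exists_pair_ne A
  obtain ⟨c, hca, hcb⟩ := ENat.exists_ne_ne_of_three_le hcard a b
  have hsub : ({a.1, b.1, c.1} : Set E) ⊆ A := by
    simp [Set.insert_subset_iff]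
  have hind := (hA.subset hsub).affineIndependent_of_ne (Subtype.coe_ne_coe.2 hab)
    (Subtype.coe_ne_coe.2 hca.symm) (Subtype.coe_ne_coe.2 hcb.symm)
  rw [← hind.finrank_vectorSpan (n := 2) (by simp)]
  apply Submodule.finrank_mono
  apply vectorSpan_mono
  rintro _ ⟨k, rfl⟩
  fin_cases k <;> simp

theorem one_le_finrank_vectorSpan [FiniteDimensional ℝ E] {A : Set E} (hA : A.Nontrivial) :
    1 ≤ finrank ℝ (vectorSpan ℝ A) := by
  rw [Submodule.one_le_finrank_iff, Ne, vectorSpan_eq_bot_iff_subsingleton]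
  exact Set.not_subsingleton_iff.2 hA

end LinearAlgebra

/-- Every point of `A` is at distance `1` from every point of `B`. The images of two distinct parts
under a unit-distance representation of a complete multipartite graph are in this position. -/
def AtUnitDist {X : Type*} [PseudoMetricSpace X] (A B : Set X) : Prop :=
  ∀ x ∈ A, ∀ y ∈ B, dist x y = 1

namespace AtUnitDist

theorem symm {X : Type*} [PseudoMetricSpace X] {A B : Set X} (h : AtUnitDist A B) :
    AtUnitDist B A := fun y hy x hx => by
  rw [dist_comm, h x hx y hy]

theorem cospherical {X : Type*} [MetricSpace X] {A B : Set X} (h : AtUnitDist A B)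
    (hB : B.Nonempty) : EuclideanGeometry.Cospherical A :=
  hB.imp fun b hb => ⟨1, fun a ha => h a ha b hb⟩

variable {E : Type*} [NormedAddCommGroup E] [InnerProductSpace ℝ E] {A B C : Set E}

theorem isOrtho_vectorSpan (h : AtUnitDist A B) : vectorSpan ℝ A ⟂ vectorSpan ℝ B := by
  rw [Submodule.isOrtho_iff_le, vectorSpan, Submodule.span_le]
  rintro _ ⟨x, hx, y, hy, rfl⟩
  exact sub_mem_orthogonal_vectorSpan_of_dist_eq (fun b hb => h.symm b hb x hx)
    fun b hb => h.symm b hb y hy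

theorem sub_mem_orthogonal_vectorSpan (hA : AtUnitDist A C) (hB : AtUnitDist B C) {x y : E}
    (hx : x ∈ affineSpan ℝ A) (hy : y ∈ affineSpan ℝ B) : x - y ∈ (vectorSpan ℝ C)ᗮ := by
  have hspan {D : Set E} (hD : AtUnitDist D C) {p q : E} (hp : p ∈ affineSpan ℝ D)
      (hq : q ∈ affineSpan ℝ D) : p - q ∈ (vectorSpan ℝ C)ᗮ := by
    apply hD.isOrtho_vectorSpan
    rw [← direction_affineSpan]
    exact AffineSubspace.vsub_mem_direction hp hq
  obtain ⟨a, ha⟩ := (affineSpan_nonempty ℝ).1 ⟨x, hx⟩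
  obtain ⟨b, hb⟩ := (affineSpan_nonempty ℝ).1 ⟨y, hy⟩
  have hab : a - b ∈ (vectorSpan ℝ C)ᗮ :=
    sub_mem_orthogonal_vectorSpan_of_dist_eq (fun z hz => hA.symm z hz a ha)
      fun z hz => hB.symm z hz b hb
  have := add_mem (add_mem (hspan hA hx (mem_affineSpan ℝ ha)) hab)
    (hspan hB (mem_affineSpan ℝ hb) hy)
  rwa [sub_add_sub_cancel, sub_add_sub_cancel] at this

theorem sq_add_sq_le_one (h : AtUnitDist A B) (hA : A.Nonempty) (hB : B.Nonempty) {o o' : E}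
    {r r' : ℝ} (ho : o ∈ affineSpan ℝ A) (hr : ∀ a ∈ A, dist a o = r)
    (ho' : o' ∈ affineSpan ℝ B) (hr' : ∀ b ∈ B, dist b o' = r') : r ^ 2 + r' ^ 2 ≤ 1 := by
  obtain ⟨a, ha⟩ := hA
  obtain ⟨b, hb⟩ := hB
  have hab : dist a b ^ 2 = dist a o ^ 2 + dist o b ^ 2 :=
    dist_sq_eq_of_sub_mem_orthogonal (mem_affineSpan ℝ ha) ho
      (sub_mem_orthogonal_vectorSpan_of_dist_eq (fun z hz => h z hz b hb) hr)
  have hao' : a - o' ∈ (vectorSpan ℝ B)ᗮ :=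
    sub_mem_orthogonal_vectorSpan_of_dist_eq (fun z hz => h.symm z hz a ha) hr'
  have hoo' : o - o' ∈ (vectorSpan ℝ B)ᗮ := by
    simpa using add_mem (h.sub_mem_orthogonal_vectorSpan h ho (mem_affineSpan ℝ ha)) hao'
  have hbo : dist b o ^ 2 = dist b o' ^ 2 + dist o' o ^ 2 :=
    dist_sq_eq_of_sub_mem_orthogonal (mem_affineSpan ℝ hb) ho' hoo'
  rw [h a ha b hb, hr a ha, dist_comm o b, hbo, hr' b hb] at hab
  linarith [sq_nonneg (dist o' o)]

end AtUnitDist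

/-- The number of dimensions contributed by a nonempty part with `c` vertices. -/
noncomputable def partDim (c : ℕ∞) : ℕ := if 3 ≤ c then 2 else 1

section LowerBound

variable {E : Type*} [NormedAddCommGroup E] [InnerProductSpace ℝ E] [FiniteDimensional ℝ E]
  {ι : Type*} {A : ι → Set E}

theorem exists_nontrivial_equidistant_sq_le_half (hA : Pairwise (AtUnitDist on A)) {i j : ι}
    (hij : i ≠ j) (hi : (A i).Nontrivial) (hj : (A j).Nontrivial) :
    ∃ l, (A l).Nontrivial ∧ ∃ o ∈ affineSpan ℝ (A l), ∃ r : ℝ,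
      r ^ 2 ≤ 1 / 2 ∧ ∀ a ∈ A l, dist a o = r := by
  have h : AtUnitDist (A i) (A j) := hA hij
  obtain ⟨o, ho, r, hr⟩ :=
    exists_mem_affineSpan_dist_eq_of_cospherical (h.cospherical hj.nonempty) hi.nonempty
  obtain ⟨o', ho', r', hr'⟩ :=
    exists_mem_affineSpan_dist_eq_of_cospherical (h.symm.cospherical hi.nonempty) hj.nonempty
  have hsum := h.sq_add_sq_le_one hi.nonempty hj.nonempty ho hr ho' hr'
  obtain hle | hle := le_total (r ^ 2) (r' ^ 2)
  · exact ⟨i, hi, o, ho, r, by linarith, hr⟩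
  · exact ⟨j, hj, o', ho', r', by linarith, hr'⟩

theorem exists_linearIndependent_mem_orthogonal_vectorSpan [Finite ι]
    (hA : Pairwise (AtUnitDist on A)) (hne : ∀ k, (A k).Nonempty) {i j : ι} (hij : i ≠ j)
    (hi : (A i).Nontrivial) (hj : (A j).Nontrivial) :
    ∃ v : {k // (A k).Subsingleton} → E,
      LinearIndependent ℝ v ∧ ∀ k l, v k ∈ (vectorSpan ℝ (A l))ᗮ := by
  obtain ⟨m, hm, o, ho, r, hr, hor⟩ := exists_nontrivial_equidistant_sq_le_half hA hij hi hj
  choose s hs using hne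
  have hkm (k : {k // (A k).Subsingleton}) : m ≠ k := fun h =>
    Set.not_subsingleton_iff.2 hm (h ▸ k.2)
  have horth (k : {k // (A k).Subsingleton}) (l : ι) : s k - o ∈ (vectorSpan ℝ (A l))ᗮ := by
    obtain rfl | hlk := eq_or_ne l k
    · simp [vectorSpan_of_subsingleton ℝ k.2]
    obtain rfl | hlm := eq_or_ne l m
    · exact sub_mem_orthogonal_vectorSpan_of_dist_eq (fun a ha => hA (hkm k) a ha _ (hs k)) hor
    · exact (hA hlk.symm).sub_mem_orthogonal_vectorSpan (hA hlm.symm)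
        (mem_affineSpan ℝ (hs k)) ho
  refine ⟨fun k => s k - o, ?_, horth⟩
  refine linearIndependent_sub_of_dist_eq (R := 1 - r ^ 2) one_pos (fun k => ?_)
    (fun k l hkl => hA (Subtype.coe_ne_coe.2 hkl) _ (hs k) _ (hs l)) (by linarith)
  have hpyth := dist_sq_eq_of_sub_mem_orthogonal (mem_affineSpan ℝ (hs m)) ho (horth k m)
  rw [hA (hkm k) _ (hs m) _ (hs k), hor _ (hs m), dist_comm] at hpyth
  linarith

open Classical in
theorem partDim_encard_le {S : Set E} (hS : EuclideanGeometry.Cospherical S) :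
    partDim S.encard ≤ finrank ℝ (vectorSpan ℝ S) + if S.Subsingleton then 1 else 0 := by
  rw [partDim]
  split_ifs with h3 h1 h1
  · exact (two_le_finrank_vectorSpan hS h3).trans (Nat.le_add_right _ _)
  · exact two_le_finrank_vectorSpan hS h3
  · exact Nat.le_add_left _ _
  · exact one_le_finrank_vectorSpan (Set.not_subsingleton_iff.1 h1)

theorem sum_partDim_encard_le_finrank [Fintype ι] (hA : Pairwise (AtUnitDist on A))
    (hne : ∀ k, (A k).Nonempty) {i j : ι} (hij : i ≠ j) (hi : (A i).Nontrivial)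
    (hj : (A j).Nontrivial) : ∑ k, partDim (A k).encard ≤ finrank ℝ E := by
  classical
  obtain ⟨v, hv, hvA⟩ := exists_linearIndependent_mem_orthogonal_vectorSpan hA hne hij hi hj
  have hcosph (k : ι) : EuclideanGeometry.Cospherical (A k) := by
    obtain ⟨l, hl⟩ : ∃ l, k ≠ l := (eq_or_ne k i).elim (fun h => ⟨j, h ▸ hij⟩) fun h => ⟨i, h⟩
    exact (hA hl).cospherical (hne l)
  have hindep : iSupIndep fun k => vectorSpan ℝ (A k) :=
    (OrthogonalFamily.of_pairwise fun _ _ hkl => (hA hkl).isOrtho_vectorSpan).independent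
  have hdisj : Disjoint (⨆ k, vectorSpan ℝ (A k)) (Submodule.span ℝ (Set.range v)) := by
    refine (Submodule.isOrtho_iSup_left.2 fun l => Submodule.IsOrtho.symm ?_).disjoint
    rw [Submodule.isOrtho_iff_le, Submodule.span_le]
    exact Set.range_subset_iff.2 fun k => hvA k l
  calc ∑ k, partDim (A k).encard
      ≤ ∑ k, (finrank ℝ (vectorSpan ℝ (A k)) + if (A k).Subsingleton then 1 else 0) :=
        Finset.sum_le_sum fun k _ => partDim_encard_le (hcosph k)
    _ = finrank ℝ ↥(⨆ k, vectorSpan ℝ (A k)) + finrank ℝ (Submodule.span ℝ (Set.range v)) := by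
        rw [Finset.sum_add_distrib, finrank_iSup_of_iSupIndep hindep, finrank_span_eq_card hv,
          Fintype.card_subtype, Finset.card_filter]
    _ ≤ finrank ℝ E := Submodule.finrank_add_finrank_le_of_disjoint hdisj

end LowerBound

section UpperBound

theorem exists_injective_fin_one_norm_eq {A : Type*} (hA : ENat.card A < 3) {r : ℝ} (hr : 0 < r) :
    ∃ g : A → EuclideanSpace ℝ (Fin 1), Injective g ∧ ∀ a, ‖g a‖ = r := by
  have : Finite A := ENat.card_lt_top.1 (hA.trans (ENat.natCast_lt_top 3))
  have := Fintype.ofFinite A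
  have hcard : Fintype.card A ≤ Fintype.card ℤˣ := by
    rw [ENat.card_eq_coe_fintype_card] at hA
    rw [Fintype.card_units_int]
    exact Nat.le_of_lt_succ (by exact_mod_cast hA)
  obtain ⟨ε⟩ := Function.Embedding.nonempty_of_card_le hcard
  refine ⟨fun a => EuclideanSpace.single 0 (r * (ε a : ℤ)), fun a b hab => ?_, fun a => ?_⟩
  · simpa [hr.ne', ← Units.ext_iff] using congrArg (fun z : EuclideanSpace ℝ (Fin 1) => z 0) hab
  · obtain h | h := Int.units_eq_one_or (ε a) <;> simp [h, hr.le]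

theorem exists_injective_fin_two_norm_eq {A : Type*} (hA : #A ≤ 𝔠) {r : ℝ} (hr : 0 < r) :
    ∃ g : A → EuclideanSpace ℝ (Fin 2), Injective g ∧ ∀ a, ‖g a‖ = r := by
  obtain ⟨e⟩ : Nonempty (A ↪ ℝ) := by
    rw [← Cardinal.lift_mk_le', Cardinal.mk_real]
    simpa using hA
  let θ (a : A) : ℝ := Real.arctan (e a)
  have hθ (a : A) : θ a ∈ Set.Icc (-(Real.pi / 2)) (Real.pi / 2) :=
    Set.Ioo_subset_Icc_self (Real.arctan_mem_Ioo _)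
  refine ⟨fun a => r • !₂[Real.cos (θ a), Real.sin (θ a)], fun a b hab => ?_, fun a => ?_⟩
  · have hsin : Real.sin (θ a) = Real.sin (θ b) := by
      simpa [hr.ne'] using congrArg (fun z : EuclideanSpace ℝ (Fin 2) => z 1) hab
    exact e.injective (Real.arctan_injective (Real.injOn_sin (hθ a) (hθ b) hsin))
  · simp [norm_smul, EuclideanSpace.norm_eq, hr.le]

theorem exists_injective_partDim_norm_eq {A : Type*} (hA : #A ≤ 𝔠) {r : ℝ} (hr : 0 < r) :
    ∃ g : A → EuclideanSpace ℝ (Fin (partDim (ENat.card A))), Injective g ∧ ∀ a, ‖g a‖ = r := by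
  by_cases h : 3 ≤ ENat.card A
  · rw [partDim, if_pos h]
    exact exists_injective_fin_two_norm_eq hA hr
  · rw [partDim, if_neg h]
    exact exists_injective_fin_one_norm_eq (not_le.1 h) hr

theorem dist_single_sq_of_ne {ι : Type*} [Fintype ι] [DecidableEq ι] {E : ι → Type*}
    [∀ i, NormedAddCommGroup (E i)] [∀ i, InnerProductSpace ℝ (E i)] {i j : ι} (hij : i ≠ j)
    (x : E i) (y : E j) :
    dist (PiLp.single 2 i x) (PiLp.single 2 j y) ^ 2 = ‖x‖ ^ 2 + ‖y‖ ^ 2 := by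
  have horth : ⟪PiLp.single 2 i x, PiLp.single 2 j y⟫_ℝ = 0 := by
    rw [PiLp.inner_apply]
    refine Finset.sum_eq_zero fun k _ => ?_
    obtain rfl | hk := eq_or_ne k i
    · rw [PiLp.single_eq_of_ne _ hij, inner_zero_right]
    · rw [PiLp.single_eq_of_ne _ hk, inner_zero_left]
  rw [dist_eq_norm, norm_sub_sq_real, horth, PiLp.norm_single, PiLp.norm_single]
  ring

theorem hasUnitDistRep_finrank {V : Type*} {G : SimpleGraph V} {E : Type*} [NormedAddCommGroup E]
    [InnerProductSpace ℝ E] [FiniteDimensional ℝ E] {f : V → E} (hf : Injective f)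
    (hadj : ∀ ⦃u v⦄, G.Adj u v → dist (f u) (f v) = 1) : G.HasUnitDistRep (finrank ℝ E) := by
  let e := (stdOrthonormalBasis ℝ E).repr
  exact ⟨e ∘ f, e.injective.comp hf, fun u v h => (e.dist_map _ _).trans (hadj h)⟩

theorem finrank_piLp_euclideanSpace_fin {ι : Type*} [Fintype ι] (d : ι → ℕ) :
    finrank ℝ (PiLp 2 fun i => EuclideanSpace ℝ (Fin (d i))) = ∑ i, d i := by
  rw [(WithLp.linearEquiv 2 ℝ _).finrank_eq, finrank_pi_fintype]
  simp only [finrank_euclideanSpace_fin]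

theorem hasUnitDistRep_sum_partDim {V ι : Type*} [Fintype ι] {P : V → ι} {G : SimpleGraph V}
    (hadj : ∀ ⦃u v⦄, G.Adj u v → P u ≠ P v) (hP : ∀ i, #{v // P v = i} ≤ 𝔠) :
    G.HasUnitDistRep (∑ i, partDim (ENat.card {v // P v = i})) := by
  classical
  have hr : (0 : ℝ) < √(1 / 2) := by positivity
  choose g hg_inj hg_norm using fun i => exists_injective_partDim_norm_eq (hP i) hr
  let F (x : Σ i, {v // P v = i}) :
      PiLp 2 fun i => EuclideanSpace ℝ (Fin (partDim (ENat.card {v // P v = i}))) :=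
    PiLp.single 2 x.1 (g x.1 x.2)
  have hF_dist {x y : Σ i, {v // P v = i}} (hxy : x.1 ≠ y.1) : dist (F x) (F y) = 1 := by
    have hsq : dist (F x) (F y) ^ 2 = 1 := by
      rw [dist_single_sq_of_ne hxy, hg_norm, hg_norm, Real.sq_sqrt (by norm_num)]
      norm_num
    exact (pow_eq_one_iff_of_nonneg dist_nonneg two_ne_zero).1 hsq
  have hF_inj : Injective F := by
    rintro ⟨i, a⟩ ⟨j, b⟩ hab
    obtain rfl : i = j := by
      by_contra hij
      simpa only [hab, dist_self, zero_ne_one] using hF_dist (x := ⟨i, a⟩) (y := ⟨j, b⟩) hij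
    exact congrArg _ (hg_inj i (by simpa [F] using congrArg (fun z => z i) hab))
  rw [← finrank_piLp_euclideanSpace_fin]
  exact hasUnitDistRep_finrank (hF_inj.comp (Equiv.sigmaFiberEquiv P).symm.injective)
    fun u v huv => hF_dist (hadj huv)

end UpperBound

theorem udim_eq_sum_partDim {V ι : Type*} [Fintype ι] {P : V → ι} {G : SimpleGraph V}
    (hadj : ∀ u v, G.Adj u v ↔ P u ≠ P v) (hV : #V ≤ 𝔠) (hP : Surjective P) {i j : ι}
    (hij : i ≠ j) (hi : Nontrivial {v // P v = i}) (hj : Nontrivial {v // P v = j}) :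
    G.udim = ∑ k, partDim (ENat.card {v // P v = k}) := by
  have hupper : G.HasUnitDistRep (∑ k, partDim (ENat.card {v // P v = k})) :=
    hasUnitDistRep_sum_partDim (fun u v => (hadj u v).1)
      fun k => (Cardinal.mk_subtype_le _).trans hV
  refine le_antisymm (Nat.sInf_le hupper) (le_csInf ⟨_, hupper⟩ ?_)
  rintro n ⟨f, hf, hdist⟩
  have hA : Pairwise (AtUnitDist on fun k => f '' {v | P v = k}) := by
    rintro k l hkl _ ⟨u, rfl, rfl⟩ _ ⟨v, rfl, rfl⟩
    exact hdist ((hadj u v).2 hkl)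
  have hlower := sum_partDim_encard_le_finrank hA (fun k => Set.Nonempty.image f (hP k)) hij
    (Set.Nontrivial.image (Set.nontrivial_coe_sort.1 hi) hf)
    (Set.Nontrivial.image (Set.nontrivial_coe_sort.1 hj) hf)
  simp only [hf.encard_image, finrank_euclideanSpace_fin] at hlower
  exact hlower

section PartSizes

variable {ι : Type*} [Fintype ι] (c : ι → ℕ∞)

theorem sum_partDim :
    ∑ i, partDim (c i) = Fintype.card ι + (Finset.univ.filter fun i => 3 ≤ c i).card := by
  rw [Finset.card_filter, ← Finset.card_univ, Finset.card_eq_sum_ones, ← Finset.sum_add_distrib]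
  refine Finset.sum_congr rfl fun i _ => ?_
  rw [partDim]
  split_ifs <;> rfl

theorem card_filter_le_eq_card_filter_eq_add {n : ℕ∞} (hn : n ≠ ⊤) :
    (Finset.univ.filter fun i => n ≤ c i).card =
      (Finset.univ.filter fun i => c i = n).card +
        (Finset.univ.filter fun i => n + 1 ≤ c i).card := by
  classical
  rw [← Finset.card_union_of_disjoint, ← Finset.filter_or]
  · congr! with i
    rw [ENat.add_one_le_iff hn, le_iff_eq_or_lt, eq_comm]
  · exact Finset.disjoint_filter.2 fun i _ heq hle =>
      ((ENat.add_one_le_iff hn).1 hle).ne' heq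

end PartSizes

theorem dim_complete_multipartite_high_general {α β γ : ℕ} (hβγ : 2 ≤ β + γ) {V ι : Type*}
    [Fintype ι] (P : V → ι) (G : SimpleGraph V) (hadj : ∀ u v, G.Adj u v ↔ P u ≠ P v)
    (hV : #V ≤ 𝔠) (hι : Fintype.card ι = α + β + γ)
    (h1 : (Finset.univ.filter fun i : ι => ENat.card {v // P v = i} = 1).card = α)
    (h2 : (Finset.univ.filter fun i : ι => ENat.card {v // P v = i} = 2).card = β)
    (h3 : (Finset.univ.filter fun i : ι => 3 ≤ ENat.card {v // P v = i}).card = γ) :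
    G.udim = α + β + 2 * γ := by
  let c (i : ι) : ℕ∞ := ENat.card {v // P v = i}
  have htwo_le : (Finset.univ.filter fun i => 2 ≤ c i).card = β + γ := by
    rw [card_filter_le_eq_card_filter_eq_add c (by simp), h2, two_add_one_eq_three, h3]
  have hone_le : (Finset.univ.filter fun i => 1 ≤ c i).card = Fintype.card ι := by
    rw [card_filter_le_eq_card_filter_eq_add c (by simp), h1, one_add_one_eq_two, htwo_le, hι,
      add_assoc]
  have hP : Surjective P := fun i => by
    have hi : 1 ≤ c i := Finset.card_filter_eq_iff.1 hone_le i (Finset.mem_univ i)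
    rw [ENat.one_le_card_iff_nonempty] at hi
    exact hi.elim fun v => ⟨v, v.2⟩
  obtain ⟨i, hi, j, hj, hij⟩ := Finset.one_lt_card.1 (hβγ.trans_eq htwo_le.symm)
  rw [Finset.mem_filter_univ, ← one_add_one_eq_two, ENat.add_one_le_iff ENat.one_ne_top,
    ENat.one_lt_card_iff_nontrivial] at hi hj
  rw [udim_eq_sum_partDim hadj hV hP hij hi hj, sum_partDim, h3, hι]
  ring

theorem dim_complete_multipartite_high (α β γ : ℕ) (hβγ : 2 ≤ β + γ)
    (V : Type) [Fintype V] (ι : Type) [Fintype ι] [DecidableEq ι]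
    (P : V → ι) (G : SimpleGraph V)
    (hadj : ∀ u v, G.Adj u v ↔ P u ≠ P v)
    (hι : Fintype.card ι = α + β + γ)
    (h1 : (Finset.univ.filter fun i : ι => Fintype.card {v // P v = i} = 1).card = α)
    (h2 : (Finset.univ.filter fun i : ι => Fintype.card {v // P v = i} = 2).card = β)
    (h3 : (Finset.univ.filter fun i : ι => 3 ≤ Fintype.card {v // P v = i}).card = γ) :
    G.udim = α + β + 2 * γ := by
  refine dim_complete_multipartite_high_general hβγ P G hadj
    (Cardinal.mk_le_aleph0.trans Cardinal.aleph0_le_continuum) hι ?_ ?_ ?_ <;>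
  simp only [ENat.card_eq_coe_fintype_card] <;> assumption_mod_cast
end

section
/- Let G be a complete multipartite graph with at least two parts, at least one of which has size 4 or larger. Then G is not dimension-critical. -/
/-!
Suppose that `x` has a neighbour and that at least three other vertices are joined to all
neighbours of `x`. In a unit-distance representation of `G` without the edges at `x`, these three
give distinct points at distance `1` from the image of the neighbourhood of `x`. Lying on a common
sphere they are not collinear, and every point of the circle through them is again at distance `1`
from that image. So a place for `x` can be chosen on this circle away from the countably many
points already used, and deleting an edge at `x` does not lower the dimension. In a complete
multipartite graph any two vertices of a part have the same neighbours.
-/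

section EuclideanGeometry

variable {E X : Type*} [NormedAddCommGroup E] [InnerProductSpace ℝ E] [MetricSpace X]
  [NormedAddTorsor E X]

theorem dist_eq_of_mem_circumsphere_of_mem_affineSpan {n : ℕ} (s : Affine.Simplex ℝ X n)
    {p q : X} {r : ℝ} (hq : ∀ i, dist (s.points i) q = r) (hp : p ∈ s.circumsphere)
    (hps : p ∈ affineSpan ℝ (Set.range s.points)) : dist p q = r := by
  have hproj := s.orthogonalProjection_eq_circumcenter_of_dist_eq hq
  have hpyth := s.dist_sq_eq_dist_orthogonalProjection_sq_add_dist_orthogonalProjection_sq q hps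
  have hpyth₀ := s.dist_sq_eq_dist_orthogonalProjection_sq_add_dist_orthogonalProjection_sq q
    (mem_affineSpan ℝ (Set.mem_range_self 0))
  have hpc : dist p s.circumcenter = s.circumradius := hp
  rw [hproj, hpc] at hpyth
  rw [hproj, s.dist_circumcenter_eq_circumradius] at hpyth₀
  calc dist p q = dist (s.points 0) q :=
        (mul_self_inj dist_nonneg dist_nonneg).1 (hpyth.trans hpyth₀.symm)
    _ = r := hq 0

theorem not_countable_sphere_of_one_lt_rank {F : Type*} [NormedAddCommGroup F] [NormedSpace ℝ F]
    (hF : 1 < Module.rank ℝ F) (c : F) {r : ℝ} (hr : 0 < r) :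
    ¬ (Metric.sphere c r).Countable := fun hcount ↦ by
  have : Nontrivial F := rank_pos_iff_nontrivial.1 (zero_lt_one.trans hF)
  obtain ⟨v, hv⟩ : (Metric.sphere (0 : F) r).Nonempty := NormedSpace.sphere_nonempty.2 hr.le
  have hsub : (Metric.sphere c r).Subsingleton :=
    hcount.isTotallyDisconnected _ subset_rfl (isPreconnected_sphere hF c r)
  have heq : c + v = c + -v := hsub (by simpa using hv) (by simpa using hv)
  exact ne_neg_of_mem_sphere ℝ hr.ne' ⟨v, hv⟩ (Subtype.ext (add_left_cancel heq))

theorem not_countable_circumsphere_inter_affineSpan {n : ℕ} (hn : 2 ≤ n)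
    (s : Affine.Simplex ℝ X n) :
    ¬ {p | p ∈ s.circumsphere ∧ p ∈ affineSpan ℝ (Set.range s.points)}.Countable := by
  obtain ⟨m, rfl⟩ := Nat.exists_eq_add_of_le' (one_le_two.trans hn)
  let W := vectorSpan ℝ (Set.range s.points)
  have hrank : 1 < Module.rank ℝ W := by
    rw [← Module.finrank_eq_rank, s.independent.finrank_vectorSpan (Fintype.card_fin _)]
    exact_mod_cast hn
  have hinj : Function.Injective fun w : W ↦ (w : E) +ᵥ s.circumcenter :=
    (vadd_right_injective _).comp Subtype.val_injective
  refine fun hcount ↦ not_countable_sphere_of_one_lt_rank hrank 0 s.circumradius_pos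
    ((hcount.preimage hinj).mono fun w hw ↦ ?_)
  constructor
  · simpa [EuclideanGeometry.mem_sphere] using hw
  · exact AffineSubspace.vadd_mem_of_mem_direction
      (direction_affineSpan ℝ (Set.range s.points) ▸ w.2) s.circumcenter_mem_affineSpan

theorem not_countable_biInter_sphere {Q : Set E} (hQ : Q.Nonempty) {r : ℝ}
    (h : 3 ≤ (⋂ q ∈ Q, Metric.sphere q r).encard) :
    ¬ (⋂ q ∈ Q, Metric.sphere q r).Countable := by
  obtain ⟨T, hT, hcard⟩ := Set.exists_subset_encard_eq h
  obtain ⟨a, b, c, hab, hac, hbc, rfl⟩ := Set.encard_eq_three.1 hcard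
  have hdist : ∀ q ∈ Q, ∀ p ∈ ({a, b, c} : Set E), dist p q = r := fun q hq p hp ↦
    Set.mem_iInter₂.1 (hT hp) q hq
  obtain ⟨q₀, hq₀⟩ := hQ
  have hcosph : EuclideanGeometry.Cospherical ({a, b, c} : Set E) := ⟨q₀, r, hdist q₀ hq₀⟩
  let s : Affine.Simplex ℝ E 2 := ⟨![a, b, c], hcosph.affineIndependent_of_ne hab hac hbc⟩
  refine fun hcount ↦ not_countable_circumsphere_inter_affineSpan le_rfl s
    (hcount.mono fun p hp ↦ Set.mem_iInter₂.2 fun q hq ↦ ?_)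
  refine dist_eq_of_mem_circumsphere_of_mem_affineSpan s (fun i ↦ hdist q hq _ ?_) hp.1 hp.2
  fin_cases i <;> simp [s]

end EuclideanGeometry

section UnitDistance

variable {V : Type*} {G H : SimpleGraph V} {x y : V} {n : ℕ}

theorem hasUnitDistRep_of_le (hGH : G ≤ H) (hH : H.HasUnitDistRep n) : G.HasUnitDistRep n := by
  obtain ⟨f, hf, hdist⟩ := hH
  exact ⟨f, hf, fun _ _ huv ↦ hdist (hGH huv)⟩

theorem deleteIncidenceSet_le_deleteEdges_singleton (G : SimpleGraph V) (x y : V) :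
    G.deleteIncidenceSet x ≤ G.deleteEdges {s(x, y)} := fun u v huv ↦ by
  obtain ⟨huv, hu, hv⟩ := SimpleGraph.deleteIncidenceSet_adj.1 huv
  simp [SimpleGraph.deleteEdges_adj, huv, hu, hv]

theorem hasUnitDistRep_of_update {f : V → EuclideanSpace ℝ (Fin n)}
    (hf : Function.Injective f)
    (hdist : ∀ ⦃u v⦄, (G.deleteIncidenceSet x).Adj u v → dist (f u) (f v) = 1)
    {p : EuclideanSpace ℝ (Fin n)} (hp : ∀ v ∈ G.neighborSet x, dist p (f v) = 1)
    (hp' : p ∉ f '' (G.neighborSet x)ᶜ) : G.HasUnitDistRep n := by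
  classical
  have hpf : ∀ v, f v ≠ p := fun v hv ↦ by
    by_cases hxv : v ∈ G.neighborSet x
    · simpa [hv] using hp v hxv
    · exact hp' ⟨v, hxv, hv⟩
  refine ⟨Function.update f x p, fun u v huv ↦ ?_, fun u v huv ↦ ?_⟩
  · rcases eq_or_ne x u with rfl | hu <;> rcases eq_or_ne x v with rfl | hv
    · rfl
    · simp [hv.symm, (hpf v).symm] at huv
    · simp [hu.symm, hpf u] at huv
    · exact hf (by simpa [hu.symm, hv.symm] using huv)
  · rcases eq_or_ne x u with rfl | hu
    · simpa [huv.ne'] using hp v huv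
    · rcases eq_or_ne x v with rfl | hv
      · simpa [hu.symm, dist_comm] using hp u huv.symm
      · simpa [hu.symm, hv.symm] using
          hdist (SimpleGraph.deleteIncidenceSet_adj.2 ⟨huv, hu.symm, hv.symm⟩)

theorem le_encard_biInter_sphere_image_neighborSet {X : Type*} [PseudoMetricSpace X] {r : ℝ}
    {k : ℕ∞} (hx : k + 1 ≤ {v | G.neighborSet x ⊆ G.neighborSet v}.encard) {f : V → X}
    (hf : Function.Injective f)
    (hdist : ∀ ⦃u v⦄, (G.deleteIncidenceSet x).Adj u v → dist (f u) (f v) = r) :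
    k ≤ (⋂ q ∈ f '' G.neighborSet x, Metric.sphere q r).encard := by
  let T := {v | G.neighborSet x ⊆ G.neighborSet v} \ {x}
  have hfT : f '' T ⊆ ⋂ q ∈ f '' G.neighborSet x, Metric.sphere q r := by
    rintro _ ⟨v, ⟨hv, hvx⟩, rfl⟩
    refine Set.mem_iInter₂.2 (Set.forall_mem_image.2 fun w hw ↦ hdist ?_)
    exact SimpleGraph.deleteIncidenceSet_adj.2 ⟨hv hw, hvx, hw.ne'⟩
  calc k ≤ {v | G.neighborSet x ⊆ G.neighborSet v}.encard - 1 :=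
        ENat.le_sub_of_add_le_right ENat.one_ne_top hx
    _ ≤ T.encard := Set.encard_tsub_one_le_encard_sdiff_singleton _ _
    _ = (f '' T).encard := (hf.encard_image T).symm
    _ ≤ _ := Set.encard_le_encard hfT

theorem hasUnitDistRep_deleteIncidenceSet_iff (hxy : G.Adj x y)
    (hcount : (G.neighborSet x)ᶜ.Countable)
    (hx : 4 ≤ {v | G.neighborSet x ⊆ G.neighborSet v}.encard) :
    (G.deleteIncidenceSet x).HasUnitDistRep n ↔ G.HasUnitDistRep n := by
  refine ⟨fun ⟨f, hf, hdist⟩ ↦ ?_, hasUnitDistRep_of_le (G.deleteIncidenceSet_le x)⟩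
  have hplaces := not_countable_biInter_sphere (Set.Nonempty.image f ⟨y, hxy⟩)
    (le_encard_biInter_sphere_image_neighborSet (by rwa [three_add_one_eq_four]) hf hdist)
  obtain ⟨p, hp, hpf⟩ := Set.not_subset.1 fun hsub ↦ hplaces ((hcount.image f).mono hsub)
  exact hasUnitDistRep_of_update hf hdist
    (fun v hv ↦ Set.mem_iInter₂.1 hp (f v) ⟨v, hv, rfl⟩) hpf

theorem not_dimCritical_of_part_ge_four_general (hxy : G.Adj x y)
    (hcount : (G.neighborSet x)ᶜ.Countable)
    (hx : 4 ≤ {v | G.neighborSet x ⊆ G.neighborSet v}.encard) : ¬ G.IsDimCritical := by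
  have hrep : ∀ n, (G.deleteEdges {s(x, y)}).HasUnitDistRep n ↔ G.HasUnitDistRep n := fun n ↦
    ⟨fun h ↦ (hasUnitDistRep_deleteIncidenceSet_iff hxy hcount hx).1
        (hasUnitDistRep_of_le (deleteIncidenceSet_le_deleteEdges_singleton G x y) h),
      hasUnitDistRep_of_le (G.deleteEdges_le _)⟩
  have hdim : (G.deleteEdges {s(x, y)}).udim = G.udim := by
    simp only [SimpleGraph.udim, hrep]
  exact fun hcrit ↦ (hcrit s(x, y) hxy).ne hdim

end UnitDistance

theorem exists_adj_encard_part_le {V ι : Type*} [Nontrivial ι] {P : V → ι}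
    (hP : Function.Surjective P) {G : SimpleGraph V} (hadj : ∀ u v, G.Adj u v ↔ P u ≠ P v)
    (i : ι) :
    ∃ x y, G.Adj x y ∧
      {v | P v = i}.encard ≤ {v | G.neighborSet x ⊆ G.neighborSet v}.encard := by
  obtain ⟨j, hij⟩ := exists_ne i
  obtain ⟨x, rfl⟩ := hP i
  obtain ⟨y, rfl⟩ := hP j
  refine ⟨x, y, (hadj x y).2 hij.symm, Set.encard_le_encard fun v hv w hw ↦ ?_⟩
  rw [SimpleGraph.mem_neighborSet, hadj] at hw ⊢
  rwa [Set.mem_ofPred.1 hv]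

theorem not_dimCritical_of_part_ge_four (V : Type) [Fintype V]
    (ι : Type) [Fintype ι] [DecidableEq ι]
    (P : V → ι) (hP : Function.Surjective P) (G : SimpleGraph V)
    (hadj : ∀ u v, G.Adj u v ↔ P u ≠ P v)
    (hparts : 2 ≤ Fintype.card ι)
    (hbig : ∃ i : ι, 4 ≤ Fintype.card {v // P v = i}) :
    ¬ G.IsDimCritical := by
  have : Nontrivial ι := Fintype.one_lt_card_iff_nontrivial.1 hparts
  obtain ⟨i, hi⟩ := hbig
  obtain ⟨x, y, hxy, hle⟩ := exists_adj_encard_part_le hP hadj i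
  have hpart : 4 ≤ {v | P v = i}.encard := by
    rw [Set.encard, ENat.card_eq_coe_fintype_card]
    exact_mod_cast hi
  exact not_dimCritical_of_part_ge_four_general hxy (Set.to_countable _) (hpart.trans hle)
end

section
/- The complete bipartite graph K_{2,3} is dimension-critical; that is, dim(K_{2,3}) = 3 and for every edge e of K_{2,3}, dim(K_{2,3} − e) < 3. -/
/-!
Two distinct unit circles in the plane meet in at most two points, so two vertices of a graph
represented in the plane have at most two common neighbours, which excludes `K_{2,3}`. In space,
`K_{2,3}` consists of edges of a bipyramid: all points of a circle are at distance `1` from the two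
apexes. Deleting an edge from `K_{2,3}` leaves a 4-cycle, drawn as a rhombus, with one pendant
edge, which can be drawn in infinitely many directions and hence without hitting another vertex.
-/

open Function Metric Module

section Basic

variable {V : Type*} {G : SimpleGraph V} {n : ℕ}

lemma hasUnitDistRep_of_finrank_le {E : Type*} [NormedAddCommGroup E] [InnerProductSpace ℝ E]
    [FiniteDimensional ℝ E] (hE : finrank ℝ E ≤ n) {f : V → E} (hf : Injective f)
    (hdist : ∀ ⦃u v⦄, G.Adj u v → dist (f u) (f v) = 1) : G.HasUnitDistRep n := by
  let b := stdOrthonormalBasis ℝ E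
  let e : Fin (finrank ℝ E) → EuclideanSpace ℝ (Fin n) :=
    fun i => EuclideanSpace.single (Fin.castLE hE i) 1
  have he : Orthonormal ℝ e :=
    EuclideanSpace.orthonormal_single.comp _ (Fin.castLE_injective hE)
  let φ : E →ₗᵢ[ℝ] EuclideanSpace ℝ (Fin n) :=
    (b.toBasis.constr ℝ e).isometryOfOrthonormal (v := b.toBasis)
      (by simp [b.orthonormal])
      (by convert he using 1; ext1 i; exact b.toBasis.constr_basis ℝ e i)
  exact ⟨φ ∘ f, φ.injective.comp hf, fun u v huv => (φ.dist_map _ _).trans (hdist huv)⟩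

lemma hasUnitDistRep_mono {m : ℕ} (hmn : m ≤ n) (h : G.HasUnitDistRep m) :
    G.HasUnitDistRep n := by
  obtain ⟨f, hf, hdist⟩ := h
  exact hasUnitDistRep_of_finrank_le (by simpa using hmn) hf hdist

lemma hasUnitDistRep_of_injective_hom {U : Type*} {H : SimpleGraph U} (φ : H →g G)
    (hφ : Injective φ) (h : G.HasUnitDistRep n) : H.HasUnitDistRep n := by
  obtain ⟨f, hf, hdist⟩ := h
  exact ⟨f ∘ φ, hf.comp hφ, fun u v huv => hdist (φ.map_adj huv)⟩

lemma udim_le_of_hasUnitDistRep (h : G.HasUnitDistRep n) : G.udim ≤ n :=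
  Nat.sInf_le h

lemma udim_eq_succ_iff : G.udim = n + 1 ↔ G.HasUnitDistRep (n + 1) ∧ ¬ G.HasUnitDistRep n :=
  Nat.sInf_upward_closed_eq_succ_iff (fun _ _ => hasUnitDistRep_mono) n

lemma encard_commonNeighbors_le_two (h : G.HasUnitDistRep 2) {u v : V} (huv : u ≠ v) :
    (G.commonNeighbors u v).encard ≤ 2 := by
  obtain ⟨f, hf, hdist⟩ := h
  by_contra! hcard
  obtain ⟨t, ht, htcard⟩ := Set.exists_subset_encard_eq (Order.add_one_le_of_lt hcard)
  obtain ⟨x, y, z, hxy, hxz, hyz, rfl⟩ := Set.encard_eq_three.mp htcard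
  have hx := ht (show x ∈ {x, y, z} by simp)
  have hy := ht (show y ∈ {x, y, z} by simp)
  have hz := ht (show z ∈ {x, y, z} by simp)
  rcases EuclideanGeometry.eq_of_dist_eq_of_dist_eq_of_finrank_eq_two (by simp)
    (hf.ne huv) (hf.ne hxy) (hdist hx.1.symm) (hdist hy.1.symm) (hdist hz.1.symm)
    (hdist hx.2.symm) (hdist hy.2.symm) (hdist hz.2.symm) with hzx | hzy
  · exact hxz (hf hzx).symm
  · exact hyz (hf hzy).symm

end Basic

section Sphere

variable {E : Type*} [NormedAddCommGroup E] [NormedSpace ℝ E]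

lemma nontrivial_sphere [Nontrivial E] (c : E) {r : ℝ} (hr : 0 < r) :
    (sphere c r).Nontrivial := by
  obtain ⟨x, hx⟩ := exists_norm_eq E hr.le
  have hx0 : x ≠ 0 := norm_pos_iff.mp (hx ▸ hr)
  refine ⟨c + x, by simpa using hx, c - x, by simpa using hx, fun h => hx0 ?_⟩
  have hx2 : (2 : ℝ) • x = 0 :=
    calc
      (2 : ℝ) • x = (c + x) - (c - x) := by module
      _ = 0 := sub_eq_zero.mpr h
  simpa using hx2

lemma infinite_sphere (hE : 1 < Module.rank ℝ E) (c : E) {r : ℝ} (hr : 0 < r) :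
    (sphere c r).Infinite :=
  have : Nontrivial E := rank_pos_iff_nontrivial.mp (zero_lt_one.trans hE)
  (isPreconnected_sphere hE c r).infinite_of_nontrivial (nontrivial_sphere c hr)

lemma infinite_sphere_euclideanSpace {n : ℕ} (hn : 1 < n) (c : EuclideanSpace ℝ (Fin n)) {r : ℝ}
    (hr : 0 < r) : (sphere c r).Infinite :=
  infinite_sphere (by simpa [← finrank_eq_rank] using hn) c hr

end Sphere

lemma hasUnitDistRep_of_induce_compl_singleton {V : Type*} [Finite V] {G : SimpleGraph V} {n : ℕ}
    (hn : 1 < n) {v : V} (hv : (G.neighborSet v).Subsingleton)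
    (h : (G.induce {v}ᶜ).HasUnitDistRep n) : G.HasUnitDistRep n := by
  classical
  obtain ⟨f, hf, hdist⟩ := h
  obtain ⟨c, hc⟩ : ∃ c, ∀ u : ({v}ᶜ : Set V), G.Adj v u → f u = c := by
    by_cases hw : ∃ w : ({v}ᶜ : Set V), G.Adj v w
    · obtain ⟨w, hw⟩ := hw
      exact ⟨f w, fun u hu => congrArg f (Subtype.ext (hv hu hw))⟩
    · exact ⟨0, fun u hu => (hw ⟨u, hu⟩).elim⟩
  obtain ⟨p, hpc, hpf⟩ :=
    (infinite_sphere_euclideanSpace hn c one_pos).exists_notMem_finite (Set.finite_range f)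
  have hpdist (u) (hu : G.Adj v u) : dist (f ⟨u, hu.ne'⟩) p = 1 := by
    rw [hc _ hu, dist_comm, mem_sphere.mp hpc]
  refine ⟨fun u => if hu : u = v then p else f ⟨u, hu⟩, fun u w huw => ?_, fun u w huw => ?_⟩
  · by_cases hu : u = v <;> by_cases hw : w = v <;> simp only [hu, hw, dite_true, dite_false] at huw
    · exact hu.trans hw.symm
    · exact (hpf ⟨_, huw.symm⟩).elim
    · exact (hpf ⟨_, huw⟩).elim
    · exact congrArg Subtype.val (hf huw)
  · by_cases hu : u = v
    · subst hu
      simpa [huw.ne', dist_comm p] using hpdist w huw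
    · by_cases hw : w = v
      · subst hw
        simpa [hu] using hpdist u huw.symm
      · simpa [hu, hw] using hdist (u := ⟨u, hu⟩) (v := ⟨w, hw⟩) huw

section CompleteBipartite

variable {V W : Type*} {n : ℕ}

lemma not_hasUnitDistRep_two_completeBipartiteGraph [Nontrivial V] (hW : 2 < ENat.card W) :
    ¬ (completeBipartiteGraph V W).HasUnitDistRep 2 := by
  intro h
  obtain ⟨v, v', hvv'⟩ := exists_pair_ne V
  have hsub : Set.range Sum.inr ⊆
      (completeBipartiteGraph V W).commonNeighbors (Sum.inl v) (Sum.inl v') := by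
    rintro _ ⟨w, rfl⟩
    simp [SimpleGraph.mem_commonNeighbors]
  have hcard : (Set.range (Sum.inr : W → V ⊕ W)).encard ≤ 2 :=
    (Set.encard_le_encard hsub).trans
      (encard_commonNeighbors_le_two h (Sum.inl_injective.ne hvv'))
  exact hW.not_ge (Sum.inr_injective.encard_range.trans hcard)

lemma hasUnitDistRep_completeBipartiteGraph_fin_two_of_embedding_sphere
    (q : W ↪ sphere (0 : EuclideanSpace ℝ (Fin n)) 1) :
    (completeBipartiteGraph (Fin 2) W).HasUnitDistRep (n + 1) := by
  -- A bipyramid over the sphere of radius `4/5`, whose apexes lie at height `±3/5`.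
  let pole : Fin 2 → WithLp 2 (ℝ × EuclideanSpace ℝ (Fin n)) :=
    ![.toLp 2 (3 / 5, 0), .toLp 2 (-3 / 5, 0)]
  let equator (w : W) : WithLp 2 (ℝ × EuclideanSpace ℝ (Fin n)) :=
    .toLp 2 (0, (4 / 5 : ℝ) • (q w : EuclideanSpace ℝ (Fin n)))
  have hpole : Injective pole := by
    refine injective_pair_iff_ne.mpr fun h => ?_
    have hheight := congrArg (fun x => x.fst) h
    norm_num at hheight
  have hequator : Injective equator := fun w w' h => by
    have hbase := congrArg (fun x => x.snd) h
    exact q.injective (Subtype.ext (by simpa [equator] using hbase))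
  have hdist (i : Fin 2) (w : W) : dist (pole i) (equator w) = 1 := by
    have hq : ‖(q w : EuclideanSpace ℝ (Fin n))‖ = 1 := by simp
    rw [WithLp.prod_dist_eq_of_L2, Real.sqrt_eq_one]
    fin_cases i <;> norm_num [pole, equator, norm_smul, hq, Real.dist_eq]
  refine hasUnitDistRep_of_finrank_le (f := Sum.elim pole equator) ?_
    (hpole.sumElim hequator fun i w h => ?_) ?_
  · rw [(WithLp.linearEquiv 2 ℝ _).finrank_eq, finrank_prod, finrank_self,
      finrank_euclideanSpace_fin, add_comm]
  · simpa [h] using hdist i w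
  · rintro (i | w) (i' | w') hadj
    · simp at hadj
    · exact hdist i w'
    · exact (dist_comm _ _).trans (hdist i' w)
    · simp at hadj

lemma hasUnitDistRep_three_completeBipartiteGraph_fin_two [Countable W] :
    (completeBipartiteGraph (Fin 2) W).HasUnitDistRep 3 := by
  have hinf : Infinite (sphere (0 : EuclideanSpace ℝ (Fin 2)) 1) :=
    (infinite_sphere_euclideanSpace one_lt_two 0 one_pos).to_subtype
  obtain ⟨g, hg⟩ := exists_injective_nat W
  let q : W ↪ sphere (0 : EuclideanSpace ℝ (Fin 2)) 1 :=
    Embedding.trans ⟨g, hg⟩ (Infinite.natEmbedding _)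
  exact hasUnitDistRep_completeBipartiteGraph_fin_two_of_embedding_sphere q

lemma hasUnitDistRep_two_completeBipartiteGraph_fin_two (e : W ↪ Fin 2) :
    (completeBipartiteGraph (Fin 2) W).HasUnitDistRep 2 := by
  obtain ⟨x, hx, y, hy, hxy⟩ := nontrivial_sphere (0 : EuclideanSpace ℝ (Fin 1)) one_pos
  let q : Fin 2 ↪ sphere (0 : EuclideanSpace ℝ (Fin 1)) 1 :=
    ⟨![⟨x, hx⟩, ⟨y, hy⟩], injective_pair_iff_ne.mpr (by simpa using hxy)⟩
  exact hasUnitDistRep_completeBipartiteGraph_fin_two_of_embedding_sphere (e.trans q)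

lemma subsingleton_neighborSet_deleteEdges_completeBipartiteGraph_fin_two (i : Fin 2) (w : W) :
    (((completeBipartiteGraph (Fin 2) W).deleteEdges
      {s(Sum.inl i, Sum.inr w)}).neighborSet (Sum.inr w)).Subsingleton := by
  have ne_of_mem {a : Fin 2} (ha : Sum.inl a ∈ ((completeBipartiteGraph (Fin 2) W).deleteEdges
      {s(Sum.inl i, Sum.inr w)}).neighborSet (Sum.inr w)) : a ≠ i := by
    rintro rfl
    simp at ha
  rintro (a | a) ha (b | b) hb
  · have ha' := ne_of_mem ha
    have hb' := ne_of_mem hb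
    exact congrArg Sum.inl (by lia)
  · simp at hb
  · simp at ha
  · simp at ha

lemma hasUnitDistRep_deleteEdges_completeBipartiteGraph_fin_two [Finite W] (hn : 1 < n)
    (i : Fin 2) (w : W) (h : (completeBipartiteGraph (Fin 2) {w' // w' ≠ w}).HasUnitDistRep n) :
    ((completeBipartiteGraph (Fin 2) W).deleteEdges
      {s(Sum.inl i, Sum.inr w)}).HasUnitDistRep n := by
  refine hasUnitDistRep_of_induce_compl_singleton hn
    (subsingleton_neighborSet_deleteEdges_completeBipartiteGraph_fin_two i w) ?_
  let restrict : ({Sum.inr w}ᶜ : Set (Fin 2 ⊕ W)) → Fin 2 ⊕ {w' // w' ≠ w}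
    | ⟨.inl a, _⟩ => .inl a
    | ⟨.inr w', hw'⟩ => .inr ⟨w', fun h => hw' (congrArg Sum.inr h)⟩
  refine hasUnitDistRep_of_injective_hom ⟨restrict, ?_⟩ ?_ h
  · rintro ⟨a | a, ha⟩ ⟨b | b, hb⟩ hab <;> simp_all [restrict]
  · rintro ⟨a | a, ha⟩ ⟨b | b, hb⟩ hab <;> simp_all [restrict]

end CompleteBipartite

theorem completeBipartite_two_three_isDimCritical :
    (completeBipartiteGraph (Fin 2) (Fin 3)).udim = 3 ∧
      ∀ e ∈ (completeBipartiteGraph (Fin 2) (Fin 3)).edgeSet,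
        ((completeBipartiteGraph (Fin 2) (Fin 3)).deleteEdges {e}).udim < 3 := by
  refine ⟨udim_eq_succ_iff.mpr ⟨hasUnitDistRep_three_completeBipartiteGraph_fin_two,
    not_hasUnitDistRep_two_completeBipartiteGraph (by norm_num)⟩, fun e he => ?_⟩
  rw [SimpleGraph.edgeSet_completeBipartiteGraph] at he
  obtain ⟨⟨i, j⟩, rfl⟩ := he
  have hrep : (completeBipartiteGraph (Fin 2) {k : Fin 3 // k ≠ j}).HasUnitDistRep 2 :=
    hasUnitDistRep_two_completeBipartiteGraph_fin_two (finSuccAboveEquiv j).symm.toEmbedding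
  exact Nat.lt_succ_of_le (udim_le_of_hasUnitDistRep
    (hasUnitDistRep_deleteEdges_completeBipartiteGraph_fin_two one_lt_two i j hrep))
end

section
/- For all integers α ≥ 0 and γ ≥ 2, the graph G(α, 0, γ) is dimension-critical. -/
/-- Part sizes for the complete multipartite graph `G(α, β, γ)`:
`α` parts of size 1, `β` parts of size 2, `γ` parts of size 3. -/
def Gsize (α β γ : ℕ) : Fin α ⊕ Fin β ⊕ Fin γ → ℕ
  | Sum.inl _ => 1
  | Sum.inr (Sum.inl _) => 2
  | Sum.inr (Sum.inr _) => 3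

/-- The complete multipartite graph `G(α, β, γ)` with `α` parts of size 1, `β` parts of
size 2, and `γ` parts of size 3; vertices are adjacent iff they lie in different parts. -/
def Gmp (α β γ : ℕ) :
    SimpleGraph (Σ i : Fin α ⊕ Fin β ⊕ Fin γ, Fin (Gsize α β γ i)) :=
  SimpleGraph.completeMultipartiteGraph fun i => Fin (Gsize α β γ i)

open Module
open scoped RealInnerProductSpace

section InnerProductSpace

variable {ι E P : Type*} [NormedAddCommGroup E] [InnerProductSpace ℝ E]

theorem linearIndependent_of_pairwise_inner_eq [Finite ι] {v : ι → E} {a : ℝ} (ha : 0 ≤ a)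
    (hv : Pairwise fun i j => ⟪v i, v j⟫ = a) (hva : ∀ i, a < ⟪v i, v i⟫) :
    LinearIndependent ℝ v := by
  classical
  have hgram : Matrix.gram ℝ v = Matrix.diagonal (fun i => ⟪v i, v i⟫ - a) +
      a • Matrix.vecMulVec (fun _ => 1) (star fun _ => 1) := by
    ext i j
    obtain rfl | hij := eq_or_ne i j
    · simp [Matrix.vecMulVec_apply]
    · simp [Matrix.vecMulVec_apply, hij, hv hij]
  apply Matrix.linearIndependent_of_posDef_gram
  rw [hgram]
  exact (Matrix.PosDef.diagonal fun i => sub_pos.2 (hva i)).add_posSemidef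
    ((Matrix.posSemidef_vecMulVec_self_star _).smul ha)

theorem sum_finrank_le_of_orthogonalFamily [Fintype ι] [FiniteDimensional ℝ E]
    {W : ι → Submodule ℝ E}
    (hW : OrthogonalFamily ℝ (fun i => W i) fun i => (W i).subtypeₗᵢ) :
    ∑ i, finrank ℝ (W i) ≤ finrank ℝ E := by
  have hbasis := hW.orthonormal_sigma_orthonormal fun i =>
    (stdOrthonormalBasis ℝ (W i)).orthonormal
  simpa using hbasis.linearIndependent.fintype_card_le_finrank

variable [MetricSpace P] [NormedAddTorsor E P]

theorem affineIndependent_of_cospherical {m : ℕ} (hm : m ≤ 2) {p : Fin (m + 1) → P}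
    (hp : Function.Injective p) (hcos : EuclideanGeometry.Cospherical (Set.range p)) :
    AffineIndependent ℝ p := by
  match m with
  | 0 =>
    have : Subsingleton (Fin (0 + 1)) := Fin.subsingleton_one
    exact affineIndependent_of_subsingleton ℝ p
  | 1 =>
    rw [← FinVec.etaExpand_eq p]
    exact affineIndependent_of_ne ℝ (hp.ne (by decide))
  | 2 => exact hcos.affineIndependent subset_rfl hp

theorem circumradius_eq_zero_of_dim_eq_zero {n : ℕ} (hn : n = 0) (s : Affine.Simplex ℝ P n) :
    s.circumradius = 0 := by
  subst hn
  rw [← s.dist_circumcenter_eq_circumradius 0, s.circumcenter_eq_point 0, dist_self]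

theorem dist_circumcenter_sq {n : ℕ} {r : ℝ} (s : Affine.Simplex ℝ P n) {p : P}
    (hp : ∀ x, dist (s.points x) p = r) :
    dist p s.circumcenter ^ 2 = r ^ 2 - s.circumradius ^ 2 := by
  simpa only [sq] using s.dist_circumcenter_sq_eq_sq_sub_circumradius hp
    (s.orthogonalProjection_eq_circumcenter_of_dist_eq hp)
    (mem_affineSpan ℝ (Set.mem_range_self 0))

theorem vectorSpan_isOrtho_of_equidistant {s t : Set P}
    (h : ∀ p ∈ s, ∀ q ∈ t, ∀ q' ∈ t, dist q p = dist q' p) :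
    vectorSpan ℝ s ⟂ vectorSpan ℝ t := by
  rw [vectorSpan_def, vectorSpan_def, Submodule.isOrtho_span]
  rintro _ ⟨p, hp, p', hp', rfl⟩ _ ⟨q, hq, q', hq', rfl⟩
  exact EuclideanGeometry.inner_vsub_vsub_of_dist_eq_of_dist_eq (h p' hp' q' hq' q hq)
    (h p hp q' hq' q hq)

/-- A family of simplices is unit-spaced when vertices of different simplices are at distance `1`,
i.e. when the vertices represent a complete multipartite graph whose parts are the vertex sets of
the simplices. -/
def UnitSpaced {n : ι → ℕ} (S : ∀ i, Affine.Simplex ℝ P (n i)) : Prop :=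
  ∀ ⦃i k⦄, i ≠ k → ∀ x y, dist ((S i).points x) ((S k).points y) = 1

namespace UnitSpaced

variable {n : ι → ℕ} {S : ∀ i, Affine.Simplex ℝ P (n i)} {i j k : ι}

theorem dist_points_circumcenter_sq (hS : UnitSpaced S) (hik : i ≠ k) (x : Fin (n i + 1)) :
    dist ((S i).points x) (S k).circumcenter ^ 2 = 1 - (S k).circumradius ^ 2 := by
  rw [dist_circumcenter_sq (S k) fun y => hS hik.symm y x, one_pow]

theorem dist_points_circumcenter_eq (hS : UnitSpaced S) (i k : ι) (x y : Fin (n i + 1)) :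
    dist ((S i).points x) (S k).circumcenter = dist ((S i).points y) (S k).circumcenter := by
  obtain rfl | hik := eq_or_ne i k
  · simp only [Affine.Simplex.dist_circumcenter_eq_circumradius]
  · rw [← sq_eq_sq₀ dist_nonneg dist_nonneg, hS.dist_points_circumcenter_sq hik,
      hS.dist_points_circumcenter_sq hik]

theorem dist_circumcenter_circumcenter_sq (hS : UnitSpaced S) (hik : i ≠ k) :
    dist (S i).circumcenter (S k).circumcenter ^ 2 =
      1 - (S i).circumradius ^ 2 - (S k).circumradius ^ 2 := by
  rw [dist_comm, dist_circumcenter_sq (S i) fun x => hS.dist_points_circumcenter_eq i k x 0,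
    hS.dist_points_circumcenter_sq hik]
  ring

theorem inner_circumcenter_vsub_eq (hS : UnitSpaced S) (hij : i ≠ j) (hkj : k ≠ j) (hik : i ≠ k) :
    ⟪(S i).circumcenter -ᵥ (S j).circumcenter, (S k).circumcenter -ᵥ (S j).circumcenter⟫ =
      1 / 2 - (S j).circumradius ^ 2 := by
  have hsub := norm_sub_sq_real ((S i).circumcenter -ᵥ (S j).circumcenter)
    ((S k).circumcenter -ᵥ (S j).circumcenter)
  rw [vsub_sub_vsub_cancel_right, ← dist_eq_norm_vsub, ← dist_eq_norm_vsub, ← dist_eq_norm_vsub,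
    hS.dist_circumcenter_circumcenter_sq hij, hS.dist_circumcenter_circumcenter_sq hkj,
    hS.dist_circumcenter_circumcenter_sq hik] at hsub
  linarith

theorem linearIndependent_circumcenter_vsub (hS : UnitSpaced S)
    (hj : (S j).circumradius ^ 2 ≤ 1 / 2) {s : Finset ι} (hjs : j ∉ s)
    (hs : ∀ i ∈ s, (S i).circumradius ^ 2 < 1 / 2) :
    LinearIndependent ℝ fun i : s => (S i).circumcenter -ᵥ (S j).circumcenter := by
  have hne (i : s) : (i : ι) ≠ j := ne_of_mem_of_not_mem i.2 hjs
  refine linearIndependent_of_pairwise_inner_eq (sub_nonneg.2 hj) (fun i k hik => ?_) fun i => ?_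
  · exact hS.inner_circumcenter_vsub_eq (hne i) (hne k) (Subtype.coe_ne_coe.2 hik)
  · rw [real_inner_self_eq_norm_sq, ← dist_eq_norm_vsub,
      hS.dist_circumcenter_circumcenter_sq (hne i)]
    linarith [hs i i.2]

theorem card_le_finrank_vectorSpan_circumcenter [FiniteDimensional ℝ E] (hS : UnitSpaced S)
    (hjk : j ≠ k) {s : Finset ι} (hjs : j ∉ s) (hks : k ∉ s)
    (hs : ∀ i ∈ s, (S i).circumradius ^ 2 < 1 / 2) :
    s.card ≤ finrank ℝ (vectorSpan ℝ (Set.range fun i => (S i).circumcenter)) := by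
  have hradii : (S j).circumradius ^ 2 + (S k).circumradius ^ 2 ≤ 1 := by
    have hdist := hS.dist_circumcenter_circumcenter_sq hjk
    linarith [sq_nonneg (dist (S j).circumcenter (S k).circumcenter)]
  wlog hj : (S j).circumradius ^ 2 ≤ 1 / 2 generalizing j k
  · exact this hjk.symm hks hjs (by linarith) (by linarith)
  rw [← Fintype.card_coe, ← finrank_span_eq_card (hS.linearIndependent_circumcenter_vsub hj hjs hs)]
  apply Submodule.finrank_mono
  rw [Submodule.span_le]
  rintro _ ⟨i, rfl⟩
  exact vsub_mem_vectorSpan ℝ (Set.mem_range_self _) (Set.mem_range_self _)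

theorem vectorSpan_isOrtho (hS : UnitSpaced S) (hik : i ≠ k) :
    vectorSpan ℝ (Set.range (S i).points) ⟂ vectorSpan ℝ (Set.range (S k).points) := by
  apply vectorSpan_isOrtho_of_equidistant
  rintro _ ⟨x, rfl⟩ _ ⟨y, rfl⟩ _ ⟨y', rfl⟩
  rw [hS hik.symm, hS hik.symm]

theorem vectorSpan_circumcenter_isOrtho (hS : UnitSpaced S) (k : ι) :
    vectorSpan ℝ (Set.range fun i => (S i).circumcenter) ⟂
      vectorSpan ℝ (Set.range (S k).points) := by
  apply vectorSpan_isOrtho_of_equidistant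
  rintro _ ⟨i, rfl⟩ _ ⟨y, rfl⟩ _ ⟨y', rfl⟩
  exact hS.dist_points_circumcenter_eq k i y y'

theorem sum_add_card_le_finrank [Fintype ι] [FiniteDimensional ℝ E] (hS : UnitSpaced S)
    (hjk : j ≠ k) {s : Finset ι} (hjs : j ∉ s) (hks : k ∉ s)
    (hs : ∀ i ∈ s, (S i).circumradius ^ 2 < 1 / 2) :
    ∑ i, n i + s.card ≤ finrank ℝ E := by
  let W : Option ι → Submodule ℝ E := fun o => o.elim
    (vectorSpan ℝ (Set.range fun i => (S i).circumcenter))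
    fun i => vectorSpan ℝ (Set.range (S i).points)
  have hW : OrthogonalFamily ℝ (fun o => W o) fun o => (W o).subtypeₗᵢ := by
    rw [orthogonalFamily_iff_pairwise]
    rintro (_ | i) (_ | k) hik
    · exact absurd rfl hik
    · exact hS.vectorSpan_circumcenter_isOrtho k
    · exact (hS.vectorSpan_circumcenter_isOrtho i).symm
    · exact hS.vectorSpan_isOrtho (by simpa using hik)
  have hfinrank (i : ι) : finrank ℝ (W (some i)) = n i :=
    (S i).independent.finrank_vectorSpan (Fintype.card_fin _)
  have hcard : s.card ≤ finrank ℝ (W none) :=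
    hS.card_le_finrank_vectorSpan_circumcenter hjk hjs hks hs
  calc ∑ i, n i + s.card ≤ ∑ i, finrank ℝ (W (some i)) + finrank ℝ (W none) := by
        simpa only [hfinrank, add_le_add_iff_left] using hcard
    _ = ∑ o, finrank ℝ (W o) := by rw [Fintype.sum_option, add_comm]
    _ ≤ finrank ℝ E := sum_finrank_le_of_orthogonalFamily hW

end UnitSpaced

end InnerProductSpace

section UnitDistRep

variable {V κ : Type*} {G : SimpleGraph V}

theorem dist_single_single_of_ne [DecidableEq κ] [Fintype κ] {i j : κ} (hij : i ≠ j) (a b : ℝ) :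
    dist (EuclideanSpace.single i a) (EuclideanSpace.single j b) = √(a ^ 2 + b ^ 2) := by
  rw [eq_comm, Real.sqrt_eq_iff_eq_sq (by positivity) dist_nonneg, dist_eq_norm,
    norm_sub_sq_real, EuclideanSpace.inner_single_left]
  simp [hij]

theorem hasUnitDistRep_card_of_coloring [Finite κ] (c : G.Coloring κ)
    (hc : ∀ i, (c.colorClass i).encard ≤ 2) : G.HasUnitDistRep (Nat.card κ) := by
  have hsign (i : κ) : ∃ σ : V → ℤˣ, Set.InjOn σ (c.colorClass i) := by
    have hfin : (c.colorClass i).Finite := Set.finite_of_encard_le_coe (k := 2) (hc i)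
    have hle : (c.colorClass i).encard ≤ (Set.univ : Set ℤˣ).encard := by
      simpa [Set.encard_univ] using hc i
    obtain ⟨σ, -, hσ⟩ := hfin.exists_injOn_of_encard_le hle
    exact ⟨σ, hσ⟩
  choose σ hσ using hsign
  let axis (v : V) : Fin (Nat.card κ) := Finite.equivFin κ (c v)
  let coord (v : V) : ℝ := (σ (c v) v : ℤ) * √2⁻¹
  have hcoord (v : V) : coord v ^ 2 = 2⁻¹ := by
    simp [coord, mul_pow, ← Int.cast_pow, ← Units.val_pow_eq_pow_val]
  refine ⟨fun v => EuclideanSpace.single (axis v) (coord v), fun u v huv => ?_, fun u v huv => ?_⟩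
  · have hval (k : Fin (Nat.card κ)) :
        (if k = axis u then coord u else 0) = if k = axis v then coord v else 0 := by
      simpa [PiLp.single_apply] using congrArg (· k) huv
    have hcoord_ne : coord u ≠ 0 := fun h => by simpa [h] using hcoord u
    have haxis : axis u = axis v := by
      by_contra hne
      exact hcoord_ne (by simpa [hne] using hval (axis u))
    have hcolor : c u = c v := (Finite.equivFin κ).injective haxis
    have hsigns : σ (c v) u = σ (c v) v := by
      simpa [haxis, coord, hcolor, Units.ext_iff] using hval (axis v)
    exact hσ (c v) hcolor rfl hsigns
  · have haxis : axis u ≠ axis v := (Finite.equivFin κ).injective.ne (c.valid huv)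
    rw [dist_single_single_of_ne haxis, hcoord, hcoord]
    norm_num

theorem hasUnitDistRep_udim [Finite V] : G.HasUnitDistRep G.udim :=
  Nat.sInf_mem (s := {n | G.HasUnitDistRep n})
    ⟨_, hasUnitDistRep_card_of_coloring G.selfColoring fun _ =>
      (Set.encard_le_one_iff.2 fun _ _ hu hw => hu.trans hw.symm).trans one_le_two⟩

theorem udim_lt_card_of_coloring_of_notMem_range [Finite κ] (c : G.Coloring κ)
    (hc : ∀ i, (c.colorClass i).encard ≤ 2) {i : κ} (hi : i ∉ Set.range c) :
    G.udim < Nat.card κ := by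
  let c' : G.Coloring (Set.range c) :=
    SimpleGraph.Coloring.mk (Set.rangeFactorization c) fun hadj h =>
      c.valid hadj (congrArg Subtype.val h)
  have hclass (k : Set.range c) : c'.colorClass k ⊆ c.colorClass k :=
    fun _ hw => congrArg Subtype.val hw
  calc G.udim ≤ Nat.card (Set.range c) := Nat.sInf_le <|
        hasUnitDistRep_card_of_coloring c' fun k => (Set.encard_le_encard (hclass k)).trans (hc k)
    _ < Nat.card κ := Finite.card_subtype_lt hi

theorem exists_coloring_deleteEdges_eq_update [DecidableEq V] (c : G.Coloring κ) {u : V}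
    (hu : c.colorClass (c u) = {u}) (v : V) :
    ∃ c' : (G.deleteEdges {s(u, v)}).Coloring κ, ⇑c' = Function.update c v (c u) := by
  have hlone {w : V} (hw : c w = c u) : w = u := hu.subset hw
  refine ⟨SimpleGraph.Coloring.mk (Function.update c v (c u)) fun {a b} hab => ?_, rfl⟩
  obtain ⟨hadj, hedge⟩ := SimpleGraph.deleteEdges_adj.1 hab
  obtain rfl | ha := eq_or_ne a v
  · rw [Function.update_self, Function.update_of_ne hadj.ne']
    intro hcolor
    exact hedge (Sym2.eq_iff.2 (Or.inr ⟨rfl, hlone hcolor.symm⟩))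
  obtain rfl | hb := eq_or_ne b v
  · rw [Function.update_self, Function.update_of_ne ha]
    intro hcolor
    exact hedge (Sym2.eq_iff.2 (Or.inl ⟨hlone hcolor, rfl⟩))
  · rw [Function.update_of_ne ha, Function.update_of_ne hb]
    exact c.valid hadj

theorem udim_deleteEdges_lt_card_of_coloring [Finite κ] (c : G.Coloring κ)
    (hc : ∀ i, (c.colorClass i).encard ≤ 2) {u v : V} (huv : u ≠ v)
    (hu : c.colorClass (c u) = {u}) (hv : c.colorClass (c v) = {v}) :
    (G.deleteEdges {s(u, v)}).udim < Nat.card κ := by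
  classical
  obtain ⟨c', hc'⟩ := exists_coloring_deleteEdges_eq_update c hu v
  have hcolor {w : V} (hw : w ≠ v) : c' w = c w := by rw [hc', Function.update_of_ne hw]
  have hcolor_v : c' v = c u := by rw [hc', Function.update_self]
  refine udim_lt_card_of_coloring_of_notMem_range c' (fun i => ?_) (i := c v) ?_
  · by_cases hi : c u = i
    · refine (Set.encard_le_encard fun w hw => ?_).trans (Set.encard_pair huv).le
      refine or_iff_not_imp_right.2 fun hwv => hu.subset ?_
      exact (hcolor hwv).symm.trans (hw.trans hi.symm)
    · refine (Set.encard_le_encard fun w hw => ?_).trans (hc i)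
      have hwv : w ≠ v := by
        rintro rfl
        exact hi (hcolor_v.symm.trans hw)
      exact (hcolor hwv).symm.trans hw
  · rintro ⟨w, hw⟩
    obtain rfl | hwv := eq_or_ne w v
    · exact huv (hv.subset (hcolor_v.symm.trans hw))
    · exact hwv (hv.subset ((hcolor hwv).symm.trans hw))

end UnitDistRep

section CompleteMultipartite

variable {ι : Type*} {V : ι → Type*}

/-- The colouring of a complete multipartite graph that splits every part into the vertex chosen by
the transversal `t` and the remaining vertices. A colour is a part together with the truth value of
"the vertex is the chosen one"; only truth values attained on that part are admitted, so that a part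
with one vertex uses one colour. -/
def transversalColoring (t : ∀ i, V i) : (SimpleGraph.completeMultipartiteGraph V).Coloring
    (Σ i, Set.range fun x : V i => x = t i) :=
  SimpleGraph.Coloring.mk (fun v => ⟨v.1, v.2 = t v.1, v.2, rfl⟩) fun huv h =>
    huv (Sigma.mk.inj h).1

theorem transversalColoring_eq_iff {t : ∀ i, V i} {u v : Σ i, V i} :
    transversalColoring t u = transversalColoring t v ↔
      u.1 = v.1 ∧ (u.2 = t u.1 ↔ v.2 = t v.1) := by
  obtain ⟨i, x⟩ := u
  obtain ⟨k, y⟩ := v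
  refine Sigma.ext_iff.trans (and_congr_right fun hik => ?_)
  obtain rfl : i = k := hik
  exact heq_iff_eq.trans (Subtype.ext_iff.trans eq_iff_iff)

theorem colorClass_transversalColoring (t : ∀ i, V i) (i : ι) (x : V i) :
    (transversalColoring t).colorClass (transversalColoring t ⟨i, x⟩) =
      Sigma.mk i '' {y | y = t i ↔ x = t i} := by
  ext ⟨k, y⟩
  refine transversalColoring_eq_iff.trans ⟨?_, ?_⟩
  · rintro ⟨rfl, h⟩
    exact ⟨y, h, rfl⟩
  · rintro ⟨y, h, ⟨⟩⟩
    exact ⟨rfl, h⟩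

theorem colorClass_transversalColoring_self (t : ∀ i, V i) (i : ι) :
    (transversalColoring t).colorClass (transversalColoring t ⟨i, t i⟩) = {⟨i, t i⟩} := by
  simp [colorClass_transversalColoring]

theorem encard_colorClass_transversalColoring_le [∀ i, Finite (V i)]
    (hV : ∀ i, Nat.card (V i) ≤ 3) (t : ∀ i, V i) (p : Σ i, Set.range fun x : V i => x = t i) :
    ((transversalColoring t).colorClass p).encard ≤ 2 := by
  obtain ⟨i, _, x, rfl⟩ := p
  change ((transversalColoring t).colorClass (transversalColoring t ⟨i, x⟩)).encard ≤ 2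
  obtain rfl | hx := eq_or_ne x (t i)
  · rw [colorClass_transversalColoring_self, Set.encard_singleton]
    exact one_le_two
  · rw [colorClass_transversalColoring]
    apply (Set.encard_image_le _ _).trans
    have hcompl : {y | y = t i ↔ x = t i} = {t i}ᶜ := by simp [hx, Set.compl_def]
    rw [hcompl, ← Set.Finite.cast_ncard_eq (Set.toFinite _), Set.ncard_compl, Set.ncard_singleton]
    exact_mod_cast Nat.sub_le_sub_right (hV i) 1

theorem card_sigma_range_le [Fintype ι] [∀ i, Finite (V i)] (t : ∀ i, V i) :
    Nat.card (Σ i, Set.range fun x : V i => x = t i) ≤ ∑ i, min (Nat.card (V i)) 2 := by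
  rw [Nat.card_sigma]
  refine Finset.sum_le_sum fun i _ => le_min (Finite.card_range_le _) ?_
  exact (Finite.card_subtype_le _).trans (by simp)

theorem udim_deleteEdges_completeMultipartiteGraph_lt [Fintype ι] [∀ i, Finite (V i)]
    [∀ i, Nonempty (V i)] (hV : ∀ i, Nat.card (V i) ≤ 3) {u v : Σ i, V i}
    (huv : (SimpleGraph.completeMultipartiteGraph V).Adj u v) :
    ((SimpleGraph.completeMultipartiteGraph V).deleteEdges {s(u, v)}).udim <
      ∑ i, min (Nat.card (V i)) 2 := by
  classical
  obtain ⟨i, x⟩ := u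
  obtain ⟨k, y⟩ := v
  have hik : i ≠ k := huv
  obtain ⟨t, rfl, rfl⟩ : ∃ t : ∀ i, V i, t i = x ∧ t k = y :=
    ⟨Function.update (Function.update (fun _ => Classical.arbitrary _) k y) i x, by simp,
      by simp [hik.symm]⟩
  calc _ < Nat.card (Σ i, Set.range fun x : V i => x = t i) :=
        udim_deleteEdges_lt_card_of_coloring (transversalColoring t)
          (encard_colorClass_transversalColoring_le hV t) huv.ne
          (colorClass_transversalColoring_self t i) (colorClass_transversalColoring_self t k)
    _ ≤ ∑ i, min (Nat.card (V i)) 2 := card_sigma_range_le t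

theorem exists_unitSpaced_of_hasUnitDistRep [Nontrivial ι] {n : ι → ℕ} (hn : ∀ i, n i ≤ 2)
    (hnV : ∀ i, n i < Nat.card (V i)) {d : ℕ}
    (h : (SimpleGraph.completeMultipartiteGraph V).HasUnitDistRep d) :
    ∃ S : ∀ i, Affine.Simplex ℝ (EuclideanSpace ℝ (Fin d)) (n i), UnitSpaced S := by
  obtain ⟨f, hf, hdist⟩ := h
  have hpick (i : ι) : ∃ g : Fin (n i + 1) → V i, Function.Injective g := by
    have := (Nat.card_pos_iff.1 ((Nat.zero_le _).trans_lt (hnV i))).2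
    exact ⟨_, ((Fin.castLEEmb (hnV i)).trans (Finite.equivFin (V i)).symm.toEmbedding).injective⟩
  choose g hg using hpick
  have hspaced {i k : ι} (hik : i ≠ k) (x : V i) (y : V k) : dist (f ⟨i, x⟩) (f ⟨k, y⟩) = 1 :=
    hdist hik
  have hcos (i : ι) : EuclideanGeometry.Cospherical (Set.range fun x => f ⟨i, g i x⟩) := by
    obtain ⟨k, hki⟩ := exists_ne i
    exact ⟨f ⟨k, g k 0⟩, 1, by rintro _ ⟨x, rfl⟩; exact hspaced hki.symm _ _⟩
  have hinj (i : ι) : Function.Injective fun x => f ⟨i, g i x⟩ :=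
    hf.comp (sigma_mk_injective.comp (hg i))
  exact ⟨fun i => ⟨_, affineIndependent_of_cospherical (hn i) (hinj i) (hcos i)⟩,
    fun i k hik x y => hspaced hik _ _⟩

theorem le_udim_completeMultipartiteGraph [Fintype ι] [∀ i, Finite (V i)] [∀ i, Nonempty (V i)]
    {j k : ι} (hjk : j ≠ k) (hj : Nat.card (V j) ≠ 1) (hk : Nat.card (V k) ≠ 1) :
    ∑ i, min (Nat.card (V i) - 1) 2 + Finset.card {i | Nat.card (V i) = 1} ≤
      (SimpleGraph.completeMultipartiteGraph V).udim := by
  have : Nontrivial ι := ⟨j, k, hjk⟩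
  have hlt (i : ι) : min (Nat.card (V i) - 1) 2 < Nat.card (V i) :=
    (min_le_left _ _).trans_lt (Nat.sub_one_lt Nat.card_pos.ne')
  obtain ⟨S, hS⟩ := exists_unitSpaced_of_hasUnitDistRep (fun _ => min_le_right _ _) hlt
    hasUnitDistRep_udim
  have hradius (i : ι) (hi : Nat.card (V i) = 1) : (S i).circumradius ^ 2 < 1 / 2 := by
    rw [circumradius_eq_zero_of_dim_eq_zero (by rw [hi, Nat.sub_self, Nat.zero_min])]
    norm_num
  simpa using hS.sum_add_card_le_finrank (s := {i | Nat.card (V i) = 1}) hjk (by simpa using hj)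
    (by simpa using hk) (by simpa using hradius)

end CompleteMultipartite

theorem Gmp_alpha_zero_gamma_isDimCritical (α γ : ℕ) (hγ : 2 ≤ γ) :
    (Gmp α 0 γ).IsDimCritical := by
  have hsize (i) : Nat.card (Fin (Gsize α 0 γ i)) = 1 ∨ Nat.card (Fin (Gsize α 0 γ i)) = 3 := by
    rcases i with i | i | i
    exacts [.inl (by simp [Gsize]), i.elim0, .inr (by simp [Gsize])]
  have hnonempty (i) : Nonempty (Fin (Gsize α 0 γ i)) :=
    (Nat.card_pos_iff.1 (by have := hsize i; omega)).1
  have htriples : (Sum.inr (Sum.inr ⟨0, by omega⟩) : Fin α ⊕ Fin 0 ⊕ Fin γ) ≠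
      Sum.inr (Sum.inr ⟨1, by omega⟩) := by simp
  intro e he
  induction e with | h u v
  calc ((Gmp α 0 γ).deleteEdges {s(u, v)}).udim
      < ∑ i, min (Nat.card (Fin (Gsize α 0 γ i))) 2 :=
        udim_deleteEdges_completeMultipartiteGraph_lt (fun i => by have := hsize i; omega) he
    _ = ∑ i, min (Nat.card (Fin (Gsize α 0 γ i)) - 1) 2 +
          Finset.card {i | Nat.card (Fin (Gsize α 0 γ i)) = 1} := by
        rw [Finset.card_filter, ← Finset.sum_add_distrib]
        refine Finset.sum_congr rfl fun i _ => ?_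
        rcases hsize i with hi | hi <;> rw [hi] <;> rfl
    _ ≤ (Gmp α 0 γ).udim :=
        le_udim_completeMultipartiteGraph htriples (by simp [Gsize]) (by simp [Gsize])
end

section
/- For all integers α ≥ 0, β ≥ 1, and γ ≥ 0 with β + γ ≥ 3, the graph G(α, β, γ) is not dimension-critical. -/
/-!
Let `G` be a complete multipartite graph with parts of size at most 3, at least two of them of size
at least 2. In a unit-distance representation each part lies on a sphere, so it is affinely
independent and has a circumcentre in its affine span. The directions spanned by the parts and the
directions spanned by the circumcentres are all mutually orthogonal, and for distinct parts with
circumradii `r` and `r'` the squared distance of the circumcentres is `(1/2 - r²) + (1/2 - r'²)`.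
This cannot be negative, so one of any two parts has `r² ≤ 1/2`. Choosing one such part of size at
least 2, its circumcentre and the singleton parts are affinely independent. Adding up ranks, a part
of size `s` contributes at least `max 1 (s - 1)` to the dimension, and a cross-polytope construction
attains this. Hence `G(α, β, γ)` has dimension `α + β + 2γ` as soon as `β + γ ≥ 2`. Deleting a
vertex of a part of size 2 turns `G(α, β, γ)` into `G(α + 1, β - 1, γ)`, of the same dimension, so
no edge at that vertex is critical.
-/

open EuclideanGeometry Module
open scoped SimpleGraph

section OrthogonalSubspaces

variable {𝕜 E ι : Type*} [RCLike 𝕜] [NormedAddCommGroup E] [InnerProductSpace 𝕜 E]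
  [FiniteDimensional 𝕜 E] [Fintype ι]

lemma sum_finrank_le_of_pairwise_isOrtho {W : ι → Submodule 𝕜 E}
    (hW : Pairwise fun i j => W i ⟂ W j) : ∑ i, finrank 𝕜 (W i) ≤ finrank 𝕜 E := by
  classical
  have horth : Orthonormal 𝕜 fun a : Σ i, Fin (finrank 𝕜 (W i)) =>
      (stdOrthonormalBasis 𝕜 (W a.1) a.2 : E) :=
    (OrthogonalFamily.of_pairwise hW).orthonormal_sigma_orthonormal fun i =>
      (stdOrthonormalBasis 𝕜 (W i)).orthonormal
  simpa using horth.linearIndependent.fintype_card_le_finrank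

lemma finrank_add_sum_finrank_le_of_isOrtho {U : Submodule 𝕜 E} {W : ι → Submodule 𝕜 E}
    (hU : ∀ i, U ⟂ W i) (hW : Pairwise fun i j => W i ⟂ W j) :
    finrank 𝕜 U + ∑ i, finrank 𝕜 (W i) ≤ finrank 𝕜 E := by
  let W' : Option ι → Submodule 𝕜 E := fun o => o.elim U W
  have hW' : Pairwise fun i j => W' i ⟂ W' j := by
    rintro (_ | i) (_ | j) hij
    · exact absurd rfl hij
    · exact hU j
    · exact (hU i).symm
    · exact hW fun h => hij (congrArg some h)
  exact (Fintype.sum_option fun o => finrank 𝕜 (W' o)).symm.trans_le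
    (sum_finrank_le_of_pairwise_isOrtho hW')

end OrthogonalSubspaces

section Circumspheres

variable {V P : Type*} [NormedAddCommGroup V] [InnerProductSpace ℝ V] [MetricSpace P]
  [NormedAddTorsor V P]

lemma vectorSpan_isOrtho_of_dist_eq {s t : Set P}
    (h : ∀ x ∈ s, ∀ y ∈ s, ∀ q ∈ t, dist x q = dist y q) :
    vectorSpan ℝ s ⟂ vectorSpan ℝ t := by
  rw [vectorSpan_def, vectorSpan_def, Submodule.isOrtho_span]
  rintro _ ⟨x, hx, y, hy, rfl⟩ _ ⟨q, hq, q', hq', rfl⟩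
  rw [real_inner_comm]
  exact inner_vsub_vsub_of_dist_eq_of_dist_eq (h y hy x hx q' hq') (h y hy x hx q hq)

lemma affineIndependent_of_injective_of_cospherical {m : ℕ} (hm : m ≤ 3) {p : Fin m → P}
    (hp : Function.Injective p) (hs : Cospherical (Set.range p)) : AffineIndependent ℝ p := by
  interval_cases m
  · exact affineIndependent_of_subsingleton ℝ p
  · exact affineIndependent_of_subsingleton ℝ p
  · have hp01 : p = ![p 0, p 1] := by ext i; fin_cases i <;> rfl
    rw [hp01]
    exact affineIndependent_of_ne ℝ (hp.ne Fin.zero_ne_one)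
  · exact hs.affineIndependent subset_rfl hp

/- Squared distances `t i + t j` are those of the points `√(t i) • eᵢ` with `e` orthonormal. -/
lemma norm_weightedVSub_sq_of_dist_sq_eq_add {ι : Type*} [Fintype ι] {c : ι → P} {t w : ι → ℝ}
    (hdist : Pairwise fun i j => dist (c i) (c j) ^ 2 = t i + t j) (hw : ∑ i, w i = 0) :
    ‖Finset.univ.weightedVSub c w‖ ^ 2 = ∑ i, t i * w i ^ 2 := by
  classical
  have hmul : ∀ i j, dist (c i) (c j) * dist (c i) (c j)
      = t i + t j - if i = j then 2 * t i else 0 := by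
    intro i j
    by_cases hij : i = j
    · subst hij
      simp [two_mul]
    · have hd : dist (c i) (c j) ^ 2 = t i + t j := hdist hij
      rw [if_neg hij, sub_zero, ← hd, sq]
  have hleft : ∑ i, ∑ j, w i * w j * t i = 0 := by
    simp_rw [mul_right_comm, ← Finset.mul_sum, hw, mul_zero, Finset.sum_const_zero]
  have hright : ∑ i, ∑ j, w i * w j * t j = 0 := by
    simp_rw [mul_assoc, ← Finset.mul_sum, ← Finset.sum_mul, hw, zero_mul]
  have hdiag : ∑ i, w i * w i * (2 * t i) = 2 * ∑ i, t i * w i ^ 2 := by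
    rw [Finset.mul_sum]
    exact Finset.sum_congr rfl fun i _ => by ring
  rw [← real_inner_self_eq_norm_sq, inner_weightedVSub c hw c hw]
  simp only [hmul, mul_sub, mul_add, mul_ite, mul_zero, Finset.sum_sub_distrib,
    Finset.sum_add_distrib, Finset.sum_ite_eq, Finset.mem_univ, if_true, hleft, hright, hdiag]
  ring

lemma affineIndependent_of_dist_sq_eq_add {ι : Type*} [Finite ι] {c : ι → P} {t : ι → ℝ}
    (hc : Function.Injective c) (ht : ∀ i, 0 ≤ t i)
    (hdist : Pairwise fun i j => dist (c i) (c j) ^ 2 = t i + t j) : AffineIndependent ℝ c := by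
  have := Fintype.ofFinite ι
  rw [affineIndependent_iff_of_fintype]
  intro w hw hrel
  have hsum : ∑ i, t i * w i ^ 2 = 0 := by
    rw [← norm_weightedVSub_sq_of_dist_sq_eq_add hdist hw, hrel, norm_zero, sq, zero_mul]
  have hterm : ∀ i, t i = 0 ∨ w i = 0 := fun i => by
    have hi := (Finset.sum_eq_zero_iff_of_nonneg fun i _ =>
      mul_nonneg (ht i) (sq_nonneg (w i))).1 hsum i (Finset.mem_univ i)
    simpa using hi
  intro i
  by_contra hi
  have hother : ∀ j, j ≠ i → w j = 0 := by
    intro j hji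
    refine (hterm j).resolve_left fun htj => hji (hc ?_)
    have hd : dist (c j) (c i) ^ 2 = t j + t i := hdist hji
    rw [htj, (hterm i).resolve_right hi, add_zero] at hd
    simpa using hd
  exact hi ((Fintype.sum_eq_single i hother).symm.trans hw)

/-- `S` is a circumsphere of `s`: it passes through all points of `s` and its centre lies in the
affine span of `s`. This is the property that determines the sphere of
`AffineIndependent.existsUnique_dist_eq`. -/
structure IsCircumsphere (S : Sphere P) (s : Set P) : Prop where
  center_mem : S.center ∈ affineSpan ℝ s
  subset : s ⊆ S

namespace IsCircumsphere

variable {S T : Sphere P} {s t : Set P}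

lemma radius_eq_zero (hS : IsCircumsphere S s) (hs : s.Nonempty) (hs' : s.Subsingleton) :
    S.radius = 0 := by
  obtain ⟨x, rfl⟩ := hs'.eq_empty_or_singleton.resolve_left hs.ne_empty
  have hcenter : S.center = x := by simpa using hS.center_mem
  have hx : dist x S.center = S.radius := hS.subset rfl
  rw [← hx, hcenter, dist_self]

lemma dist_center_sq {q : P} {d : ℝ} (hS : IsCircumsphere S s) (hs : s.Nonempty)
    (hd : ∀ x ∈ s, dist x q = d) : dist S.center q ^ 2 = d ^ 2 - S.radius ^ 2 := by
  obtain ⟨x, hx⟩ := hs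
  have hxS : dist x S.center = S.radius := hS.subset hx
  have hortho : vectorSpan ℝ s ⟂ vectorSpan ℝ {S.center, q} := by
    refine vectorSpan_isOrtho_of_dist_eq fun y hy z hz c hc => ?_
    rcases hc with rfl | rfl
    · exact (hS.subset hy).trans (hS.subset hz).symm
    · rw [hd y hy, hd z hz]
  have hperp : inner ℝ (x -ᵥ S.center) (q -ᵥ S.center) = 0 := by
    refine Submodule.isOrtho_iff_inner_eq.1 hortho _ ?_ _ ?_
    · exact vsub_mem_vectorSpan_of_mem_affineSpan_of_mem_affineSpan
        (mem_affineSpan ℝ hx) hS.center_mem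
    · exact vsub_mem_vectorSpan ℝ (by simp) (by simp)
  have hpyth := norm_sub_sq_real (x -ᵥ S.center) (q -ᵥ S.center)
  rw [vsub_sub_vsub_cancel_right, hperp, ← dist_eq_norm_vsub, ← dist_eq_norm_vsub,
    ← dist_eq_norm_vsub, hd x hx, hxS, dist_comm q] at hpyth
  linarith

lemma dist_center_center_sq {d : ℝ} (hS : IsCircumsphere S s) (hT : IsCircumsphere T t)
    (hs : s.Nonempty) (ht : t.Nonempty) (hd : ∀ x ∈ s, ∀ y ∈ t, dist x y = d) :
    dist S.center T.center ^ 2 = d ^ 2 - S.radius ^ 2 - T.radius ^ 2 := by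
  have hSt : ∀ y ∈ t, dist y S.center = √(d ^ 2 - S.radius ^ 2) := fun y hy => by
    rw [dist_comm, ← hS.dist_center_sq hs fun x hx => hd x hx y hy, Real.sqrt_sq dist_nonneg]
  obtain ⟨y, hy⟩ := ht
  rw [dist_comm, hT.dist_center_sq ⟨y, hy⟩ hSt, ← hSt y hy, dist_comm,
    hS.dist_center_sq hs fun x hx => hd x hx y hy]

end IsCircumsphere

end Circumspheres

section UnitDistanceParts

variable {V P ι : Type*} [NormedAddCommGroup V] [InnerProductSpace ℝ V] [MetricSpace P]
  [NormedAddTorsor V P] {s : ι → Set P} {S : ι → Sphere P}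

lemma pairwise_vectorSpan_isOrtho_of_dist_eq_one
    (hdist : Pairwise fun i j => ∀ x ∈ s i, ∀ y ∈ s j, dist x y = 1) :
    Pairwise fun i j => vectorSpan ℝ (s i) ⟂ vectorSpan ℝ (s j) := fun _ _ hij =>
  vectorSpan_isOrtho_of_dist_eq fun x hx y hy q hq => by
    rw [hdist hij x hx q hq, hdist hij y hy q hq]

lemma IsCircumsphere.vectorSpan_centers_isOrtho (hS : ∀ i, IsCircumsphere (S i) (s i))
    (hs : ∀ i, (s i).Nonempty)
    (hdist : Pairwise fun i j => ∀ x ∈ s i, ∀ y ∈ s j, dist x y = 1) (i : ι) :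
    vectorSpan ℝ (Set.range fun j => (S j).center) ⟂ vectorSpan ℝ (s i) := by
  refine (vectorSpan_isOrtho_of_dist_eq ?_).symm
  rintro x hx y hy _ ⟨j, rfl⟩
  by_cases hji : j = i
  · subst hji
    exact ((hS j).subset hx).trans ((hS j).subset hy).symm
  · have hsq : ∀ z ∈ s i, dist z (S j).center ^ 2 = 1 ^ 2 - (S j).radius ^ 2 := fun z hz => by
      rw [dist_comm, (hS j).dist_center_sq (hs j) fun a ha => hdist hji a ha z hz]
    rw [← sq_eq_sq₀ dist_nonneg dist_nonneg, hsq x hx, hsq y hy]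

lemma IsCircumsphere.radius_sq_le_half_or_radius_sq_le_half (hS : ∀ i, IsCircumsphere (S i) (s i))
    (hs : ∀ i, (s i).Nonempty)
    (hdist : Pairwise fun i j => ∀ x ∈ s i, ∀ y ∈ s j, dist x y = 1) {j k : ι} (hjk : j ≠ k) :
    (S j).radius ^ 2 ≤ 1 / 2 ∨ (S k).radius ^ 2 ≤ 1 / 2 := by
  have hsq := (hS j).dist_center_center_sq (hS k) (hs j) (hs k) (hdist hjk)
  by_contra! h
  linarith [sq_nonneg (dist (S j).center (S k).center), h.1, h.2]

lemma IsCircumsphere.affineIndependent_centers (hS : ∀ i, IsCircumsphere (S i) (s i))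
    (hs : ∀ i, (s i).Nonempty)
    (hdist : Pairwise fun i j => ∀ x ∈ s i, ∀ y ∈ s j, dist x y = 1) {T : Finset ι} {l : ι}
    (hT : ∀ i ∈ T, i ≠ l → (s i).Subsingleton) (hl : (S l).radius ^ 2 ≤ 1 / 2) :
    AffineIndependent ℝ fun i : T => (S i).center := by
  have hradius : ∀ i ∈ T, i ≠ l → (S i).radius = 0 := fun i hi hil =>
    (hS i).radius_eq_zero (hs i) (hT i hi hil)
  have hsq : Pairwise fun i j : T => dist (S i).center (S j).center ^ 2
      = (1 / 2 - (S i).radius ^ 2) + (1 / 2 - (S j).radius ^ 2) := fun i j hij => by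
    dsimp only
    rw [(hS i).dist_center_center_sq (hS j) (hs i) (hs j) (hdist (Subtype.coe_ne_coe.2 hij))]
    ring
  have hhalf : ∀ i : T, (i : ι) ≠ l → 1 / 2 - (S i).radius ^ 2 = 1 / 2 := fun i hi => by
    rw [hradius i i.2 hi, sq, zero_mul, sub_zero]
  have hnonneg : ∀ i : T, 0 ≤ 1 / 2 - (S i).radius ^ 2 := fun i => by
    by_cases hi : (i : ι) = l
    · rw [hi]
      linarith
    · rw [hhalf i hi]
      norm_num
  refine affineIndependent_of_dist_sq_eq_add (fun i j hcenter => ?_) hnonneg hsq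
  by_contra hij
  have hd := hsq hij
  simp only [hcenter, dist_self] at hd
  rcases ne_or_eq (i : ι) l with hi | hi
  · linarith [hhalf i hi, hnonneg j]
  · have hj : (j : ι) ≠ l := fun hj => hij (Subtype.ext (hi.trans hj.symm))
    linarith [hhalf j hj, hnonneg i]

lemma IsCircumsphere.card_le_finrank_vectorSpan_centers [FiniteDimensional ℝ V]
    (hS : ∀ i, IsCircumsphere (S i) (s i)) (hs : ∀ i, (s i).Nonempty)
    (hdist : Pairwise fun i j => ∀ x ∈ s i, ∀ y ∈ s j, dist x y = 1) {A : Finset ι} {l : ι}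
    (hA : ∀ i ∈ A, (s i).Subsingleton) (hlA : l ∉ A) (hl : (S l).radius ^ 2 ≤ 1 / 2) :
    A.card ≤ finrank ℝ (vectorSpan ℝ (Set.range fun i => (S i).center)) := by
  classical
  let T : Finset ι := insert l A
  have hcenters : AffineIndependent ℝ fun i : T => (S i).center :=
    IsCircumsphere.affineIndependent_centers hS hs hdist
      (fun i hi hil => hA i (Finset.mem_of_mem_insert_of_ne hi hil)) hl
  have : Nonempty T := ⟨⟨l, Finset.mem_insert_self l A⟩⟩
  have hcard : finrank ℝ (vectorSpan ℝ (Set.range fun i : T => (S i).center)) = A.card := by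
    simpa [T, hlA] using hcenters.finrank_vectorSpan_add_one
  rw [← hcard]
  refine Submodule.finrank_mono (vectorSpan_mono ℝ ?_)
  exact Set.range_comp_subset_range Subtype.val fun i => (S i).center

theorem sum_max_one_card_sub_one_le_finrank_of_dist_eq_one [FiniteDimensional ℝ V] [Fintype ι]
    {X : ι → Type*} [∀ i, Fintype (X i)] [∀ i, Nonempty (X i)] {p : ∀ i, X i → P}
    (hp : ∀ i, AffineIndependent ℝ (p i))
    (hdist : Pairwise fun i j => ∀ a b, dist (p i a) (p j b) = 1)
    {j k : ι} (hjk : j ≠ k) (hj : 1 < Fintype.card (X j)) (hk : 1 < Fintype.card (X k)) :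
    ∑ i, max 1 (Fintype.card (X i) - 1) ≤ finrank ℝ V := by
  choose S hS using fun i => (hp i).existsUnique_dist_eq.exists
  replace hS : ∀ i, IsCircumsphere (S i) (Set.range (p i)) := fun i => ⟨(hS i).1, (hS i).2⟩
  have hs : ∀ i, (Set.range (p i)).Nonempty := fun i => Set.range_nonempty _
  have hd : Pairwise fun i j => ∀ x ∈ Set.range (p i), ∀ y ∈ Set.range (p j), dist x y = 1 := by
    rintro i j hij _ ⟨a, rfl⟩ _ ⟨b, rfl⟩
    exact hdist hij a b
  obtain ⟨l, hl, hlS⟩ : ∃ l, 1 < Fintype.card (X l) ∧ (S l).radius ^ 2 ≤ 1 / 2 :=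
    (IsCircumsphere.radius_sq_le_half_or_radius_sq_le_half hS hs hd hjk).elim (⟨j, hj, ·⟩)
      (⟨k, hk, ·⟩)
  let A : Finset ι := {i | Fintype.card (X i) = 1}
  have hA : ∀ i ∈ A, (Set.range (p i)).Subsingleton := fun i hi => by
    have := Fintype.card_le_one_iff_subsingleton.1 (Finset.mem_filter.1 hi).2.le
    exact Set.subsingleton_range _
  have hlA : l ∉ A := by simp [A, hl.ne']
  have hW : ∀ i, finrank ℝ (vectorSpan ℝ (Set.range (p i))) = Fintype.card (X i) - 1 :=
    fun i => Nat.eq_sub_of_add_eq (hp i).finrank_vectorSpan_add_one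
  calc ∑ i, max 1 (Fintype.card (X i) - 1)
      = A.card + ∑ i, (Fintype.card (X i) - 1) := by
        rw [Finset.card_filter, ← Finset.sum_add_distrib]
        refine Finset.sum_congr rfl fun i _ => ?_
        have := Fintype.card_pos (α := X i)
        split_ifs <;> omega
    _ ≤ finrank ℝ (vectorSpan ℝ (Set.range fun i => (S i).center))
          + ∑ i, finrank ℝ (vectorSpan ℝ (Set.range (p i))) := by
        simpa only [hW] using
          Nat.add_le_add_right
            (IsCircumsphere.card_le_finrank_vectorSpan_centers hS hs hd hA hlA hlS) _
    _ ≤ finrank ℝ V :=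
        finrank_add_sum_finrank_le_of_isOrtho
          (IsCircumsphere.vectorSpan_centers_isOrtho hS hs hd)
          (pairwise_vectorSpan_isOrtho_of_dist_eq_one hd)

end UnitDistanceParts

section UnitDistanceDimension

variable {V W : Type*} {G : SimpleGraph V} {H : SimpleGraph W}

lemma hasUnitDistRep_of_isContained (h : G ⊑ H) {n : ℕ} (hH : H.HasUnitDistRep n) :
    G.HasUnitDistRep n := by
  obtain ⟨φ⟩ := h
  obtain ⟨f, hf, hdist⟩ := hH
  exact ⟨f ∘ φ, hf.comp φ.injective, fun u v huv => hdist (φ.toHom.map_adj huv)⟩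

lemma hasUnitDistRep_udim_s8 {n : ℕ} (hG : G.HasUnitDistRep n) : G.HasUnitDistRep G.udim :=
  Nat.sInf_mem (s := {n | G.HasUnitDistRep n}) ⟨n, hG⟩

lemma udim_le {n : ℕ} (hG : G.HasUnitDistRep n) : G.udim ≤ n :=
  Nat.sInf_le hG

lemma udim_le_udim_of_isContained (h : G ⊑ H) {n : ℕ} (hH : H.HasUnitDistRep n) :
    G.udim ≤ H.udim :=
  udim_le (hasUnitDistRep_of_isContained h (hasUnitDistRep_udim_s8 hH))

/- The vertex `v` is placed at the vertex `± √(1 / 2)` on the axis `axis v` of a cross-polytope of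
edge length `1`; only antipodal vertices of it fail to be at distance `1`. -/
lemma hasUnitDistRep_card_of_axis {K : Type*} [Fintype K] (axis : V → K) (side : V → Bool)
    (hinj : Function.Injective fun v => (axis v, side v))
    (hadj : ∀ ⦃u v⦄, G.Adj u v → axis u ≠ axis v) : G.HasUnitDistRep (Fintype.card K) := by
  let e := Fintype.equivFin K
  let x : Bool → ℝ := fun b => bif b then √(1 / 2) else -√(1 / 2)
  have hsq : ∀ b, x b ^ 2 = 1 / 2 := by simp [x]
  have hx : Function.Injective x := by
    have hpos : (0 : ℝ) < √(1 / 2) := by positivity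
    rintro (_ | _) (_ | _) h <;> simp only [x, cond_true, cond_false] at h <;>
      first | rfl | linarith
  have hx0 : ∀ b, x b ≠ 0 := fun b h => by simpa [h] using hsq b
  let f : V → EuclideanSpace ℝ (Fin (Fintype.card K)) := fun v =>
    EuclideanSpace.single (e (axis v)) (x (side v))
  refine ⟨f, fun u v huv => hinj ?_, fun u v huv => ?_⟩
  · have hcoord : x (side u) = if e (axis u) = e (axis v) then x (side v) else 0 := by
      simpa [f] using congrArg (fun z : EuclideanSpace ℝ _ => z (e (axis u))) huv
    split_ifs at hcoord with haxis
    · exact Prod.ext (e.injective haxis) (hx hcoord)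
    · exact absurd hcoord (hx0 _)
  · have hperp : inner ℝ (f u) (f v) = 0 := by
      simp [f, EuclideanSpace.inner_single_left, hadj huv]
    have hnorm : ∀ v, ‖f v‖ ^ 2 = 1 / 2 := fun v => by
      simp only [f, PiLp.norm_single, Real.norm_eq_abs, sq_abs, hsq]
    have hd : dist (f u) (f v) ^ 2 = 1 := by
      rw [dist_eq_norm, norm_sub_sq_real, hperp, hnorm, hnorm]
      norm_num
    exact (pow_eq_one_iff_of_nonneg dist_nonneg two_ne_zero).1 hd

lemma not_isDimCritical_of_udim_le_udim_deleteIncidenceSet {n : ℕ} (hG : G.HasUnitDistRep n)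
    {v w : V} (hvw : G.Adj v w) (hv : G.udim ≤ (G.deleteIncidenceSet v).udim) :
    ¬ G.IsDimCritical := by
  intro hcrit
  have hle : G.deleteIncidenceSet v ≤ G.deleteEdges {s(v, w)} :=
    SimpleGraph.deleteEdges_anti (Set.singleton_subset_iff.2 ⟨hvw, Sym2.mem_mk_left v w⟩)
  have hrep : (G.deleteEdges {s(v, w)}).HasUnitDistRep n :=
    hasUnitDistRep_of_isContained (.of_le (G.deleteEdges_le _)) hG
  exact (hcrit s(v, w) hvw).not_ge
    (hv.trans (udim_le_udim_of_isContained (.of_le hle) hrep))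

end UnitDistanceDimension

section CompleteMultipartite

variable {ι : Type*} [Fintype ι]

lemma hasUnitDistRep_completeMultipartiteGraph_fin (s : ι → ℕ) :
    (SimpleGraph.completeMultipartiteGraph fun i => Fin (s i)).HasUnitDistRep
      (∑ i, (s i + 1) / 2) := by
  -- The vertices `2 m` and `2 m + 1` of a part are the two ends of one axis.
  let axis : (Σ i, Fin (s i)) → Σ i, Fin ((s i + 1) / 2) := fun v =>
    ⟨v.1, ⟨v.2 / 2, by omega⟩⟩
  have hrep := hasUnitDistRep_card_of_axis
    (G := SimpleGraph.completeMultipartiteGraph fun i => Fin (s i)) axis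
    (fun v => decide (Even (v.2 : ℕ))) ?_ ?_
  · simpa using hrep
  · rintro ⟨i, a⟩ ⟨j, b⟩ h
    simp only [axis, Prod.mk.injEq, Sigma.mk.injEq, decide_eq_decide, Nat.even_iff] at h
    obtain ⟨⟨rfl, haxis⟩, hside⟩ := h
    rw [heq_eq_eq, Fin.mk.injEq] at haxis
    obtain rfl : a = b := Fin.ext (by omega)
    rfl
  · rintro ⟨i, a⟩ ⟨j, b⟩ hij h
    exact hij (congrArg (fun x : Σ i, Fin ((s i + 1) / 2) => x.1) h)

variable {s : ι → ℕ}

lemma sum_le_of_hasUnitDistRep_completeMultipartiteGraph_fin {n : ℕ} (hs : ∀ i, s i ∈ Set.Icc 1 3)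
    {j k : ι} (hjk : j ≠ k) (hj : 1 < s j) (hk : 1 < s k)
    (hrep : (SimpleGraph.completeMultipartiteGraph fun i => Fin (s i)).HasUnitDistRep n) :
    ∑ i, (s i + 1) / 2 ≤ n := by
  obtain ⟨f, hf, hdist⟩ := hrep
  let p : ∀ i, Fin (s i) → EuclideanSpace ℝ (Fin n) := fun i a => f ⟨i, a⟩
  have hd : Pairwise fun i j => ∀ a b, dist (p i a) (p j b) = 1 := fun i j hij a b => hdist hij
  have : ∀ i, Nonempty (Fin (s i)) := fun i => Fin.pos_iff_nonempty.1 (hs i).1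
  have : Nontrivial ι := ⟨j, k, hjk⟩
  have hp : ∀ i, AffineIndependent ℝ (p i) := by
    intro i
    obtain ⟨m, hm⟩ := exists_ne i
    have b : Fin (s m) := Classical.arbitrary _
    refine affineIndependent_of_injective_of_cospherical (hs i).2
      (hf.comp sigma_mk_injective) ⟨p m b, 1, ?_⟩
    rintro _ ⟨a, rfl⟩
    exact hd hm.symm a b
  calc ∑ i, (s i + 1) / 2 = ∑ i, max 1 (Fintype.card (Fin (s i)) - 1) := by
        refine Finset.sum_congr rfl fun i _ => ?_
        obtain ⟨h1, h3⟩ := hs i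
        rw [Fintype.card_fin]
        omega
    _ ≤ finrank ℝ (EuclideanSpace ℝ (Fin n)) :=
        sum_max_one_card_sub_one_le_finrank_of_dist_eq_one hp hd hjk (by simpa using hj)
          (by simpa using hk)
    _ = n := finrank_euclideanSpace_fin

theorem udim_completeMultipartiteGraph_fin (hs : ∀ i, s i ∈ Set.Icc 1 3) {j k : ι} (hjk : j ≠ k)
    (hj : 1 < s j) (hk : 1 < s k) :
    (SimpleGraph.completeMultipartiteGraph fun i => Fin (s i)).udim = ∑ i, (s i + 1) / 2 := by
  have hrep := hasUnitDistRep_completeMultipartiteGraph_fin s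
  exact (udim_le hrep).antisymm
    (sum_le_of_hasUnitDistRep_completeMultipartiteGraph_fin hs hjk hj hk (hasUnitDistRep_udim_s8 hrep))

lemma completeMultipartiteGraph_fin_isContained_deleteIncidenceSet {ι κ : Type*} {s : ι → ℕ}
    {t : κ → ℕ} {f : ι → κ} (hf : Function.Injective f) (hst : ∀ i, s i ≤ t (f i))
    {v : Σ k, Fin (t k)} (hv : ∀ i, f i = v.1 → s i ≤ v.2) :
    (SimpleGraph.completeMultipartiteGraph fun i => Fin (s i)) ⊑
      (SimpleGraph.completeMultipartiteGraph fun k => Fin (t k)).deleteIncidenceSet v := by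
  let φ : (Σ i, Fin (s i)) → Σ k, Fin (t k) := Sigma.map f fun i => Fin.castLE (hst i)
  have hφ : Function.Injective φ := hf.sigma_map fun i => Fin.castLE_injective (hst i)
  have hφv : ∀ u, φ u ≠ v := by
    rintro ⟨i, a⟩ rfl
    exact (hv i rfl).not_gt a.2
  refine ⟨⟨⟨φ, fun {u w} huw => ?_⟩, hφ⟩⟩
  rw [SimpleGraph.deleteIncidenceSet_adj]
  exact ⟨hf.ne huw, hφv u, hφv w⟩

end CompleteMultipartite

namespace Gmp

lemma udim_eq (α : ℕ) {β γ : ℕ} (h : 2 ≤ β + γ) : (Gmp α β γ).udim = α + β + 2 * γ := by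
  obtain ⟨j, k, hjk⟩ : ∃ j k : Fin β ⊕ Fin γ, j ≠ k :=
    Fintype.one_lt_card_iff.1 (by simpa [Nat.lt_iff_add_one_le] using h)
  have hlarge : ∀ j : Fin β ⊕ Fin γ, 1 < Gsize α β γ (Sum.inr j) := by
    rintro (_ | _) <;> simp [Gsize]
  have hsize : ∀ i, Gsize α β γ i ∈ Set.Icc 1 3 := by
    rintro (_ | _ | _) <;> simp [Gsize]
  rw [Gmp, udim_completeMultipartiteGraph_fin hsize (Sum.inr_injective.ne hjk) (hlarge j)
    (hlarge k)]
  simp only [Gsize, Fintype.sum_sum_type, Finset.sum_const, Finset.card_univ, Fintype.card_fin,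
    smul_eq_mul]
  ring

lemma exists_adj {α β γ : ℕ} (h : 1 < α + (β + γ)) (v : Σ i, Fin (Gsize α β γ i)) :
    ∃ w, (Gmp α β γ).Adj v w := by
  have : Nontrivial (Fin α ⊕ Fin β ⊕ Fin γ) :=
    Fintype.one_lt_card_iff_nontrivial.1 (by simpa using h)
  obtain ⟨i, hi⟩ := exists_ne v.1
  have hpos : 0 < Gsize α β γ i := by
    rcases i with _ | _ | _ <;> simp [Gsize]
  exact ⟨⟨i, ⟨0, hpos⟩⟩, hi.symm⟩

/-- The part of `G(α, β + 1, γ)` corresponding to a part of `G(α + 1, β, γ)` when the latter graph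
is obtained by deleting a vertex of the first part of size 2, which becomes the first singleton. -/
def widenPart (α β γ : ℕ) : Fin (α + 1) ⊕ Fin β ⊕ Fin γ → Fin α ⊕ Fin (β + 1) ⊕ Fin γ :=
  Sum.elim (Fin.cons (Sum.inr (Sum.inl 0)) Sum.inl) (Sum.inr ∘ Sum.map Fin.succ id)

lemma widenPart_injective (α β γ : ℕ) : Function.Injective (widenPart α β γ) := by
  refine Function.Injective.sumElim ?_ ?_ fun i j => ?_
  · exact Fin.cons_injective_iff.2 ⟨by simp, Sum.inl_injective⟩
  · exact Sum.inr_injective.comp ((Fin.succ_injective β).sumMap Function.injective_id)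
  · cases i using Fin.cases <;> rcases j with j | j <;> simp [(Fin.succ_ne_zero _).symm]

lemma isContained_deleteIncidenceSet (α β γ : ℕ) :
    Gmp (α + 1) β γ ⊑
      (Gmp α (β + 1) γ).deleteIncidenceSet ⟨Sum.inr (Sum.inl 0), (1 : Fin 2)⟩ := by
  refine completeMultipartiteGraph_fin_isContained_deleteIncidenceSet (widenPart_injective α β γ)
    ?_ ?_
  · rintro (i | i | i)
    · cases i using Fin.cases <;> simp [Gsize, widenPart]
    · exact le_rfl
    · exact le_rfl
  · rintro (i | i | i) h
    · exact le_rfl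
    · simp [widenPart] at h
    · simp [widenPart] at h

end Gmp

theorem Gmp_not_dimCritical_of_beta_pos (α β γ : ℕ) (hβ : 1 ≤ β) (hβγ : 3 ≤ β + γ) :
    ¬ (Gmp α β γ).IsDimCritical := by
  obtain ⟨β, rfl⟩ := Nat.exists_eq_add_of_le' hβ
  have hrep := hasUnitDistRep_completeMultipartiteGraph_fin (Gsize α (β + 1) γ)
  let v : Σ i, Fin (Gsize α (β + 1) γ i) := ⟨Sum.inr (Sum.inl 0), (1 : Fin 2)⟩
  have hdelete : (Gmp α (β + 1) γ).udim ≤ ((Gmp α (β + 1) γ).deleteIncidenceSet v).udim := calc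
    (Gmp α (β + 1) γ).udim = α + (β + 1) + 2 * γ := Gmp.udim_eq α (by omega)
    _ = (Gmp (α + 1) β γ).udim := by rw [Gmp.udim_eq (α + 1) (by omega)]; ring
    _ ≤ _ := udim_le_udim_of_isContained (Gmp.isContained_deleteIncidenceSet α β γ)
      (hasUnitDistRep_of_isContained (.of_le (SimpleGraph.deleteEdges_le _)) hrep)
  obtain ⟨w, hw⟩ := Gmp.exists_adj (by omega) v
  exact not_isDimCritical_of_udim_le_udim_deleteIncidenceSet hrep hw hdelete
end
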